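/- arXiv:1807.08358 — 2 statements merged into one kernel-verified Lean document; each statement's English description precedes it below -/
import Mathlib

section
/- Let G be a finite group of order 2^m with m ≥ 8 and nilpotency class m − 3 (i.e., G is a 2-group of coclass 3 and order at least 2^8). If the automorphism group Aut(G) is not a 2-group, then G is isomorphic to K_{m−6}^i for some i ∈ {1, 2, 3, 4, 5, 6}, where K_n^i are defined as follows: the common relations together with (i=1) g1² = 1, g2² = g3·t, g5^{g4} = g5; (i=2) g1² = 1, g2² = g3·t^{1+2^n}, g5^{g4} = g5; (i=3) g1² = t^{2^n}, g2² = g3·t, g5^{g4} = g5; (i=4) g1² = 1, g2² = g3·t, g5^{g4} = g5·t^{2^n}; (i=5) g1² = 1, g2² = g3·t^{1+2^n}, g5^{g4} = g5·t^{2^n}; (i=6) g1² = t^{2^n}, g2² = g3·t, g5^{g4} = g5·t^{2^n}. -/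
/-- Generators `g₁, g₂, g₃, g₄, g₅, t` for the coclass-`3` groups `Kₙⁱ`. -/
inductive KGen : Type
  | g1 | g2 | g3 | g4 | g5 | t

namespace KGen

def a1 : FreeGroup KGen := FreeGroup.of KGen.g1
def a2 : FreeGroup KGen := FreeGroup.of KGen.g2
def a3 : FreeGroup KGen := FreeGroup.of KGen.g3
def a4 : FreeGroup KGen := FreeGroup.of KGen.g4
def a5 : FreeGroup KGen := FreeGroup.of KGen.g5
def tt : FreeGroup KGen := FreeGroup.of KGen.t

/-- Conjugation `x ^ y = y⁻¹ * x * y`. -/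
def cnj (x y : FreeGroup KGen) : FreeGroup KGen := y⁻¹ * x * y

/-- The common relators: `g₂^g₁ = g₂g₃`, `g₃^g₁ = g₃t`, `g₃^g₂ = g₃`, `g₃² = t⁻¹`,
`g₄^g₁ = g₄`, `g₄^g₂ = g₄`, `g₄^g₃ = g₄`, `g₄² = 1`, `g₅^g₁ = g₅`, `g₅^g₂ = g₅`,
`g₅^g₃ = g₅`, `g₅² = 1`, `t^g₁ = t⁻¹`, `t^g₂ = t`, `t^g₃ = t`, `t^g₄ = t`, `t^g₅ = t`,
`t^(2^(n+1)) = 1`. -/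
def commonRels (n : ℕ) : Set (FreeGroup KGen) :=
  {cnj a2 a1 * (a2 * a3)⁻¹,
   cnj a3 a1 * (a3 * tt)⁻¹,
   cnj a3 a2 * a3⁻¹,
   a3 ^ 2 * tt,
   cnj a4 a1 * a4⁻¹,
   cnj a4 a2 * a4⁻¹,
   cnj a4 a3 * a4⁻¹,
   a4 ^ 2,
   cnj a5 a1 * a5⁻¹,
   cnj a5 a2 * a5⁻¹,
   cnj a5 a3 * a5⁻¹,
   a5 ^ 2,
   cnj tt a1 * tt,
   cnj tt a2 * tt⁻¹,
   cnj tt a3 * tt⁻¹,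
   cnj tt a4 * tt⁻¹,
   cnj tt a5 * tt⁻¹,
   tt ^ (2 ^ (n + 1))}

end KGen

open KGen

/-- `Kₙ¹`: common relators together with `g₁² = 1`, `g₂² = g₃t`, `g₅^g₄ = g₅`. -/
abbrev K1 (n : ℕ) : Type :=
  PresentedGroup (commonRels n ∪
    {a1 ^ 2, a2 ^ 2 * (a3 * tt)⁻¹, cnj a5 a4 * a5⁻¹})

/-- `Kₙ²`: common relators together with `g₁² = 1`, `g₂² = g₃t^(1+2^n)`, `g₅^g₄ = g₅`. -/
abbrev K2 (n : ℕ) : Type :=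
  PresentedGroup (commonRels n ∪
    {a1 ^ 2, a2 ^ 2 * (a3 * tt ^ (1 + 2 ^ n))⁻¹, cnj a5 a4 * a5⁻¹})

/-- `Kₙ³`: common relators together with `g₁² = t^(2^n)`, `g₂² = g₃t`, `g₅^g₄ = g₅`. -/
abbrev K3 (n : ℕ) : Type :=
  PresentedGroup (commonRels n ∪
    {a1 ^ 2 * (tt ^ (2 ^ n))⁻¹, a2 ^ 2 * (a3 * tt)⁻¹, cnj a5 a4 * a5⁻¹})

/-- `Kₙ⁴`: common relators together with `g₁² = 1`, `g₂² = g₃t`, `g₅^g₄ = g₅t^(2^n)`. -/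
abbrev K4 (n : ℕ) : Type :=
  PresentedGroup (commonRels n ∪
    {a1 ^ 2, a2 ^ 2 * (a3 * tt)⁻¹, cnj a5 a4 * (a5 * tt ^ (2 ^ n))⁻¹})

/-- `Kₙ⁵`: common relators together with `g₁² = 1`, `g₂² = g₃t^(1+2^n)`,
`g₅^g₄ = g₅t^(2^n)`. -/
abbrev K5 (n : ℕ) : Type :=
  PresentedGroup (commonRels n ∪
    {a1 ^ 2, a2 ^ 2 * (a3 * tt ^ (1 + 2 ^ n))⁻¹, cnj a5 a4 * (a5 * tt ^ (2 ^ n))⁻¹})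

/-- `Kₙ⁶`: common relators together with `g₁² = t^(2^n)`, `g₂² = g₃t`,
`g₅^g₄ = g₅t^(2^n)`. -/
abbrev K6 (n : ℕ) : Type :=
  PresentedGroup (commonRels n ∪
    {a1 ^ 2 * (tt ^ (2 ^ n))⁻¹, a2 ^ 2 * (a3 * tt)⁻¹, cnj a5 a4 * (a5 * tt ^ (2 ^ n))⁻¹})

/-!
An automorphism group that is not a `2`-group contains an automorphism `φ` of odd prime order `p`.
Since `φ` acts coprimely, `G = C_G(φ) [G, φ]`, and a `φ`-invariant section of `G` on which `φ` acts
nontrivially has order at least `p + 1 ≥ 4`. As `G` has coclass `3`, only the first few factors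
`Γᵢ / Γᵢ₊₁` of the lower central series can be that large, and commutator arguments for
`G ⋊ ⟨φ⟩` exclude all of them except `G / [G, G]`. Hence `φ` fixes `[G, G]` pointwise, so that
`C = C_G(φ)` centralises `[G, φ]`.

It follows that `p = 3`, that `C` has index `4` in `G` and that `|C : [C, C]| = 4`. Thus `C` has
maximal class: it is dihedral, semidihedral or quaternion. Modulo `[G, G]`, the group `[G, φ]` is
generated by an orbit `x, y, (x y)⁻¹` of `φ`, where `x ^ 2 = y ^ 2 = [x, y]` is a central element
of order at most `2`. So `G` is the central product of `C` with a four-group or a quaternion group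
of order `8`; the type of `C` and the two cases for `[x, y]` give the six presentations.
-/

open Subgroup
open scoped commutatorElement

section Presentations

/-- The three relators in which the groups `Kₙⁱ` differ, with exponents scaled so that
`(α, β, γ)` runs over `(0, 0, 0)`, `(0, 1, 0)`, `(1, 0, 0)`, `(0, 0, 1)`, `(0, 1, 1)`,
`(1, 0, 1)` as `i` runs from `1` to `6`. -/
def parameterRels (n α β γ : ℕ) : Set (FreeGroup KGen) :=
  {a1 ^ 2 * (tt ^ (α * 2 ^ n))⁻¹, a2 ^ 2 * (a3 * tt ^ (1 + β * 2 ^ n))⁻¹,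
    cnj a5 a4 * (a5 * tt ^ (γ * 2 ^ n))⁻¹}

/-- The group presented by the common relators and `parameterRels`; all six `Kₙⁱ` are of this
form. -/
abbrev KGroup (n α β γ : ℕ) : Type :=
  PresentedGroup (commonRels n ∪ parameterRels n α β γ)

/-- The defining relations of `KGroup n α β γ`, read in an arbitrary group. -/
structure KGroupRelations (n α β γ : ℕ) {H : Type*} [Group H] (f : KGen → H) : Prop where
  conj_g2_g1 : (f .g1)⁻¹ * f .g2 * f .g1 = f .g2 * f .g3
  conj_g3_g1 : (f .g1)⁻¹ * f .g3 * f .g1 = f .g3 * f .t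
  conj_g3_g2 : (f .g2)⁻¹ * f .g3 * f .g2 = f .g3
  sq_g3 : f .g3 ^ 2 = (f .t)⁻¹
  conj_g4_g1 : (f .g1)⁻¹ * f .g4 * f .g1 = f .g4
  conj_g4_g2 : (f .g2)⁻¹ * f .g4 * f .g2 = f .g4
  conj_g4_g3 : (f .g3)⁻¹ * f .g4 * f .g3 = f .g4
  sq_g4 : f .g4 ^ 2 = 1
  conj_g5_g1 : (f .g1)⁻¹ * f .g5 * f .g1 = f .g5
  conj_g5_g2 : (f .g2)⁻¹ * f .g5 * f .g2 = f .g5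
  conj_g5_g3 : (f .g3)⁻¹ * f .g5 * f .g3 = f .g5
  sq_g5 : f .g5 ^ 2 = 1
  conj_t_g1 : (f .g1)⁻¹ * f .t * f .g1 = (f .t)⁻¹
  conj_t_g2 : (f .g2)⁻¹ * f .t * f .g2 = f .t
  conj_t_g3 : (f .g3)⁻¹ * f .t * f .g3 = f .t
  conj_t_g4 : (f .g4)⁻¹ * f .t * f .g4 = f .t
  conj_t_g5 : (f .g5)⁻¹ * f .t * f .g5 = f .t
  pow_t : f .t ^ (2 ^ (n + 1)) = 1
  sq_g1 : f .g1 ^ 2 = f .t ^ (α * 2 ^ n)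
  sq_g2 : f .g2 ^ 2 = f .g3 * f .t ^ (1 + β * 2 ^ n)
  conj_g5_g4 : (f .g4)⁻¹ * f .g5 * f .g4 = f .g5 * f .t ^ (γ * 2 ^ n)

variable {H : Type*} [Group H]

theorem lift_rels_eq_one_iff {n α β γ : ℕ} {f : KGen → H} :
    (∀ r ∈ commonRels n ∪ parameterRels n α β γ, FreeGroup.lift f r = 1) ↔
      KGroupRelations n α β γ f := by
  simp only [commonRels, parameterRels, Set.mem_union, Set.mem_insert_iff,
    Set.mem_singleton_iff, or_imp, forall_and, forall_eq, cnj, a1, a2, a3, a4, a5, tt, map_mul,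
    map_inv, map_pow, FreeGroup.lift_apply_of, mul_eq_one_iff_eq_inv, inv_inv]
  constructor
  · rintro ⟨⟨h1, h2, h3, h4, h5, h6, h7, h8, h9, h10, h11, h12, h13, h14, h15, h16, h17, h18⟩,
      h19, h20, h21⟩
    constructor <;> assumption
  · rintro ⟨⟩
    refine ⟨⟨?_, ?_, ?_, ?_, ?_, ?_, ?_, ?_, ?_, ?_, ?_, ?_, ?_, ?_, ?_, ?_, ?_, ?_⟩,
      ?_, ?_, ?_⟩ <;> assumption

theorem inv_mul_mul_eq_self_iff {x y : H} : x⁻¹ * y * x = y ↔ Commute x y := by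
  rw [mul_assoc, inv_mul_eq_iff_eq_mul, eq_comm, commute_iff_eq]

theorem card_closure_insert_dvd {S : Set H} {x : H}
    (hconj : ∀ s ∈ S, x⁻¹ * s * x ∈ closure S) (hsq : x ^ 2 ∈ closure S) :
    Nat.card (closure (insert x S)) ∣ 2 * Nat.card (closure S) := by
  have hle : closure S ≤ closure (insert x S) := closure_mono (Set.subset_insert x S)
  have hinv (s : H) (hs : s ∈ S) : x⁻¹ * s⁻¹ * x ∈ closure S := by
    simpa [mul_assoc] using inv_mem (hconj s hs)
  have hindex : (closure S).relIndex (closure (insert x S)) ∣ 2 := by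
    refine relIndex_dvd_two_iff.mpr
      ⟨x, subset_closure (Set.mem_insert x S), fun b hb => ?_⟩
    induction hb using closure_induction_right with
    | one => exact Or.inr (one_mem _)
    | mul_right b _ y hy ih =>
      rcases hy with rfl | hy
      · refine ih.symm.imp (fun hb => ?_) id
        simpa [pow_two, mul_assoc] using mul_mem hb hsq
      · refine ih.imp (fun hb => ?_) (fun hb => mul_mem hb (subset_closure hy))
        simpa [mul_assoc] using mul_mem hb (hconj y hy)
    | mul_inv_cancel b _ y hy ih =>
      rcases hy with rfl | hy
      · refine ih.symm.imp (fun hb => by simpa using hb) (fun hb => ?_)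
        simpa [pow_two, mul_assoc] using mul_mem hb (inv_mem hsq)
      · refine ih.imp (fun hb => ?_) (fun hb => mul_mem hb (inv_mem (subset_closure hy)))
        simpa [mul_assoc] using mul_mem hb (hinv y hy)
  rw [← relIndex_bot_left, ← relIndex_bot_left, ← relIndex_mul_relIndex _ _ _ bot_le hle,
    mul_comm]
  exact Nat.mul_dvd_mul_right hindex _

namespace KGroupRelations

variable {n α β γ : ℕ} {f : KGen → H}

theorem g2_pow_four (h : KGroupRelations n α β γ f) : f .g2 ^ 4 = f .t := by
  have hcomm : Commute (f .g3) (f .t) := by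
    rw [← inv_inv (f .t), ← h.sq_g3]
    exact ((Commute.refl _).pow_right 2).inv_right
  calc f .g2 ^ 4 = (f .g3 * f .t ^ (1 + β * 2 ^ n)) ^ 2 := by rw [← h.sq_g2, ← pow_mul]
    _ = (f .t)⁻¹ * (f .t * f .t * (f .t ^ 2 ^ (n + 1)) ^ β) := by
      rw [(hcomm.pow_right _).mul_pow, h.sq_g3]
      group
    _ = f .t := by rw [h.pow_t]; group

theorem t_mem_zpowers (h : KGroupRelations n α β γ f) : f .t ∈ zpowers (f .g2) :=
  h.g2_pow_four ▸ npow_mem_zpowers _ _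

theorem g3_mem_zpowers (h : KGroupRelations n α β γ f) : f .g3 ∈ zpowers (f .g2) := by
  rw [← mul_inv_eq_iff_eq_mul.mpr h.sq_g2]
  exact mul_mem (npow_mem_zpowers _ _) (inv_mem (pow_mem h.t_mem_zpowers _))

theorem closure_range (h : KGroupRelations n α β γ f) :
    closure (Set.range f) = closure {f .g5, f .g4, f .g1, f .g2} := by
  have hz : zpowers (f .g2) ≤ closure {f .g5, f .g4, f .g1, f .g2} :=
    zpowers_le.mpr (subset_closure (by simp))
  refine le_antisymm ((closure_le _).mpr ?_) (closure_mono ?_)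
  · rintro _ ⟨x, rfl⟩
    cases x with
    | g3 => exact hz h.g3_mem_zpowers
    | t => exact hz h.t_mem_zpowers
    | _ => exact subset_closure (by simp)
  · simp [Set.insert_subset_iff]

theorem card_dvd (h : KGroupRelations n α β γ f) (hgen : closure (Set.range f) = ⊤) :
    Nat.card H ∣ 2 ^ (n + 6) := by
  have h3 : Nat.card (closure {f .g2}) ∣ 2 ^ (n + 3) := by
    rw [← zpowers_eq_closure, Nat.card_zpowers]
    refine orderOf_dvd_of_pow_eq_one ?_
    rw [show 2 ^ (n + 3) = 4 * 2 ^ (n + 1) by ring, pow_mul, h.g2_pow_four, h.pow_t]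
  have hz : zpowers (f .g2) = closure {f .g2} := zpowers_eq_closure _
  have ht := hz ▸ h.t_mem_zpowers
  have hg2 : f .g2 ∈ closure {f .g2} := mem_closure_singleton_self _
  have h4 : Nat.card (closure {f .g1, f .g2}) ∣ 2 * Nat.card (closure {f .g2}) := by
    refine card_closure_insert_dvd ?_ (h.sq_g1 ▸ pow_mem ht _)
    rintro _ rfl
    rw [h.conj_g2_g1]
    exact mul_mem hg2 (hz ▸ h.g3_mem_zpowers)
  have h5 : Nat.card (closure {f .g4, f .g1, f .g2}) ∣ 2 * Nat.card (closure {f .g1, f .g2}) := by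
    refine card_closure_insert_dvd ?_ (h.sq_g4 ▸ one_mem _)
    rintro s (rfl | rfl) <;> rw [inv_mul_mul_eq_self_iff.mpr]
    exacts [subset_closure (by simp), (inv_mul_mul_eq_self_iff.mp h.conj_g4_g1).symm,
      subset_closure (by simp), (inv_mul_mul_eq_self_iff.mp h.conj_g4_g2).symm]
  have h6 : Nat.card (closure {f .g5, f .g4, f .g1, f .g2}) ∣
      2 * Nat.card (closure {f .g4, f .g1, f .g2}) := by
    refine card_closure_insert_dvd ?_ (h.sq_g5 ▸ one_mem _)
    have hg4 : f .g4 ∈ closure {f .g4, f .g1, f .g2} := subset_closure (by simp)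
    have hsub := closure_mono (Set.subset_insert (f .g4) {f .g1, f .g2})
    rintro s (rfl | rfl | rfl)
    · have hconj : (f .g5)⁻¹ * f .g4 * f .g5 = f .g4 * (f .t ^ (γ * 2 ^ n))⁻¹ := by
        rw [← inv_mul_eq_iff_eq_mul.mpr h.conj_g5_g4]
        group
      rw [hconj]
      exact mul_mem hg4 (inv_mem (pow_mem (hsub (closure_mono (by simp) ht)) _))
    all_goals rw [inv_mul_mul_eq_self_iff.mpr]
    exacts [subset_closure (by simp), (inv_mul_mul_eq_self_iff.mp h.conj_g5_g1).symm,
      subset_closure (by simp), (inv_mul_mul_eq_self_iff.mp h.conj_g5_g2).symm]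
  rw [h.closure_range] at hgen
  rw [← card_top (G := H), ← hgen, show 2 ^ (n + 6) = 2 * (2 * (2 * 2 ^ (n + 3))) by ring]
  exact h6.trans (mul_dvd_mul_left 2 (h5.trans (mul_dvd_mul_left 2
    (h4.trans (mul_dvd_mul_left 2 h3)))))

theorem nonempty_mulEquiv [Finite H] (h : KGroupRelations n α β γ f)
    (hgen : closure (Set.range f) = ⊤) (hcard : Nat.card H = 2 ^ (n + 6)) :
    Nonempty (H ≃* KGroup n α β γ) := by
  have hK : KGroupRelations n α β γ
      (PresentedGroup.of (rels := commonRels n ∪ parameterRels n α β γ)) := by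
    refine lift_rels_eq_one_iff.mp fun r hr => ?_
    rw [← PresentedGroup.one_of_mem hr]
    congr 1
    ext
    simp [PresentedGroup.of]
  have hdvd := hK.card_dvd (PresentedGroup.closure_range_of _)
  have hfin : Finite (KGroup n α β γ) :=
    Nat.finite_of_card_ne_zero (ne_zero_of_dvd_ne_zero (by positivity) hdvd)
  let F := PresentedGroup.toGroup (lift_rels_eq_one_iff.mpr h)
  have hsurj : Function.Surjective F := by
    rw [← MonoidHom.range_eq_top, eq_top_iff, ← hgen, closure_le]
    rintro _ ⟨x, rfl⟩
    exact ⟨PresentedGroup.of x, PresentedGroup.toGroup.of _⟩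
  have hbij : Function.Bijective F :=
    hsurj.bijective_of_nat_card_le (hcard ▸ Nat.le_of_dvd (by positivity) hdvd)
  exact ⟨(MulEquiv.ofBijective F hbij).symm⟩

end KGroupRelations

/-- `G` is one of the six groups `Kₙⁱ`, in the parametrised form. -/
def IsKGroup (G : Type*) [Group G] (n : ℕ) : Prop :=
  ∃ α ≤ 1, ∃ β ≤ 1, ∃ γ ≤ 1, (α = 0 ∨ β = 0) ∧ Nonempty (G ≃* KGroup n α β γ)

theorem IsKGroup.nonempty_mulEquiv {n : ℕ} (h : IsKGroup H n) :
    Nonempty (H ≃* K1 n) ∨ Nonempty (H ≃* K2 n) ∨ Nonempty (H ≃* K3 n) ∨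
      Nonempty (H ≃* K4 n) ∨ Nonempty (H ≃* K5 n) ∨ Nonempty (H ≃* K6 n) := by
  obtain ⟨α, hα, β, hβ, γ, hγ, hαβ, e⟩ := h
  have iso (rels : Set (FreeGroup KGen)) (hrels : parameterRels n α β γ = rels) :
      Nonempty (H ≃* PresentedGroup (commonRels n ∪ rels)) := hrels ▸ e
  have hcases : (α = 0 ∧ β = 0 ∨ α = 0 ∧ β = 1 ∨ α = 1 ∧ β = 0) ∧ (γ = 0 ∨ γ = 1) := by omega
  obtain ⟨⟨rfl, rfl⟩ | ⟨rfl, rfl⟩ | ⟨rfl, rfl⟩, rfl | rfl⟩ := hcases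
  · exact .inl (iso _ (by simp [parameterRels]))
  · exact .inr (.inr (.inr (.inl (iso _ (by simp [parameterRels])))))
  · exact .inr (.inl (iso _ (by simp [parameterRels])))
  · exact .inr (.inr (.inr (.inr (.inl (iso _ (by simp [parameterRels]))))))
  · exact .inr (.inr (.inl (iso _ (by simp [parameterRels]))))
  · exact .inr (.inr (.inr (.inr (.inr (iso _ (by simp [parameterRels]))))))

end Presentations

section Recognition

variable {G : Type*} [Group G]

/-- The relations between `r` and `s` in a group of maximal class with cyclic subgroup `⟨r⟩` of
index two; `r ^ 2 ^ k` is the central involution. The parities of `α` and `β` distinguish the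
dihedral (both even), quaternion (only `α` odd) and semidihedral (`β` odd) cases. -/
structure MaxClassRelations (k α β : ℕ) (r s : G) : Prop where
  pow_eq_one : r ^ 2 ^ (k + 1) = 1
  conj : s⁻¹ * r * s = r⁻¹ * (r ^ 2 ^ k) ^ β
  sq : s ^ 2 = (r ^ 2 ^ k) ^ α

/-- The values of the six generators of `KGroup n α β γ` determined by those of
`g₁`, `g₂ = r`, `g₄` and `g₅`: the relations force `t = r ^ 4`, and `g₃` is read off from
`g₂ ^ g₁ = g₂ * g₃`. -/
def kGroupGenerators (n β : ℕ) (r s g4 g5 : G) : KGen → G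
  | .g1 => s
  | .g2 => r
  | .g3 => r ^ (4 * β * 2 ^ n - 2 : ℤ)
  | .g4 => g4
  | .g5 => g5
  | .t => r ^ (4 : ℤ)

/-- Involutions `g4` and `g5` that centralise `⟨r, s⟩`, generate the group together with it and
have commutator `(r ^ 2 ^ (n + 2)) ^ γ`: they play the roles of `g₄` and `g₅`. -/
structure InvolutionPair (n γ : ℕ) (r s g4 g5 : G) : Prop where
  commute_g4_r : Commute g4 r
  commute_g4_s : Commute g4 s
  commute_g5_r : Commute g5 r
  commute_g5_s : Commute g5 s
  sq_g4 : g4 ^ 2 = 1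
  sq_g5 : g5 ^ 2 = 1
  conj : g4⁻¹ * g5 * g4 = g5 * (r ^ 2 ^ (n + 2)) ^ γ
  closure_eq_top : closure {s, r, g4, g5} = ⊤

theorem InvolutionPair.mul_generator {n γ : ℕ} {r s g4 g5 : G}
    (h : InvolutionPair n γ r s g4 g5) : InvolutionPair n γ r (s * r) g4 g5 where
  __ := h
  commute_g4_s := h.commute_g4_s.mul_right h.commute_g4_r
  commute_g5_s := h.commute_g5_s.mul_right h.commute_g5_r
  closure_eq_top := by
    rw [eq_top_iff, ← h.closure_eq_top, closure_le]
    have hr : r ∈ closure {s * r, r, g4, g5} := subset_closure (by simp)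
    have hs : s ∈ closure {s * r, r, g4, g5} :=
      (mul_mem_cancel_right hr).mp (subset_closure (by simp))
    rintro _ (rfl | rfl | rfl | rfl)
    exacts [hs, hr, subset_closure (by simp), subset_closure (by simp)]

namespace MaxClassRelations

variable {k α β : ℕ} {r s : G}

theorem involution (h : MaxClassRelations k α β r s) : (r ^ 2 ^ k) ^ 2 = 1 := by
  rw [← pow_mul, ← pow_succ, h.pow_eq_one]

theorem map {H : Type*} [Group H] (f : G →* H) (h : MaxClassRelations k α β r s) :
    MaxClassRelations k α β (f r) (f s) where
  pow_eq_one := by simpa using congrArg f h.pow_eq_one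
  conj := by simpa using congrArg f h.conj
  sq := by simpa using congrArg f h.sq

theorem of_mod_two_eq {α' β' : ℕ} (h : MaxClassRelations k α β r s) (hα : α % 2 = α' % 2)
    (hβ : β % 2 = β' % 2) : MaxClassRelations k α' β' r s where
  pow_eq_one := h.pow_eq_one
  conj := by rw [h.conj, pow_eq_pow_mod β h.involution, hβ, ← pow_eq_pow_mod β' h.involution]
  sq := by rw [h.sq, pow_eq_pow_mod α h.involution, hα, ← pow_eq_pow_mod α' h.involution]

theorem mul_generator (h : MaxClassRelations k α β r s) :
    MaxClassRelations k (α + β) β r (s * r) where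
  pow_eq_one := h.pow_eq_one
  conj := by
    calc (s * r)⁻¹ * r * (s * r) = r⁻¹ * (s⁻¹ * r * s) * r := by group
      _ = r⁻¹ * (r ^ 2 ^ k) ^ β := by rw [h.conj]; group
  sq := by
    calc (s * r) ^ 2 = s ^ 2 * (s⁻¹ * r * s) * r := by simp only [pow_two]; group
      _ = (r ^ 2 ^ k) ^ (α + β) := by rw [h.conj, h.sq]; group

theorem mul_right_of_commute (h : MaxClassRelations k α β r s) {x : G} (hr : Commute x r)
    (hs : Commute x s) (hx : x ^ 2 = r ^ 2 ^ k) : MaxClassRelations k (α + 1) β r (s * x) where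
  pow_eq_one := h.pow_eq_one
  conj := by
    calc (s * x)⁻¹ * r * (s * x) = x⁻¹ * (s⁻¹ * r * s) * x := by group
      _ = s⁻¹ * r * s := by
        rw [h.conj, inv_mul_mul_eq_self_iff]
        exact hr.inv_right.mul_right ((hr.pow_right _).pow_right _)
      _ = r⁻¹ * (r ^ 2 ^ k) ^ β := h.conj
  sq := by rw [hs.symm.mul_pow, h.sq, hx, pow_succ]

theorem conj_pow_of_even (h : MaxClassRelations k α β r s) {m : ℕ} (hm : Even m) :
    s⁻¹ * r ^ m * s = (r ^ m)⁻¹ := by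
  obtain ⟨j, rfl⟩ := hm.two_dvd
  have hcomm : Commute r⁻¹ ((r ^ 2 ^ k) ^ β) :=
    ((Commute.refl r).pow_right _).pow_right _ |>.inv_left
  calc s⁻¹ * r ^ (2 * j) * s = (s⁻¹ * r * s) ^ (2 * j) := by simpa using (conj_pow (a := s⁻¹)).symm
    _ = (r⁻¹) ^ (2 * j) * ((r ^ 2 ^ k) ^ 2) ^ (β * j) := by
      rw [h.conj, hcomm.mul_pow, ← pow_mul (r ^ 2 ^ k) β, ← pow_mul (r ^ 2 ^ k) 2, mul_left_comm]
    _ = (r ^ (2 * j))⁻¹ := by rw [h.involution, one_pow, mul_one, inv_pow]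

theorem zpow_eq_zpow {n : ℕ} (h : MaxClassRelations (n + 2) α β r s) {a b : ℤ} (c : ℤ)
    (hab : a - b = 8 * 2 ^ n * c) : r ^ a = r ^ b := by
  have hr : r ^ (8 * 2 ^ n : ℤ) = 1 := by
    rw [← h.pow_eq_one, ← zpow_natCast]
    congr 1
    push_cast
    ring
  rw [← sub_add_cancel a b, hab, zpow_add, zpow_mul, hr, one_zpow, one_mul]

theorem involution_pow_eq_zpow (r : G) (n a : ℕ) :
    (r ^ 2 ^ (n + 2)) ^ a = r ^ (4 * a * 2 ^ n : ℤ) := by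
  rw [← pow_mul, ← zpow_natCast]
  congr 1
  push_cast
  ring

theorem conj_zpow {n : ℕ} (h : MaxClassRelations (n + 2) α β r s) (a : ℤ) :
    s⁻¹ * r ^ a * s = r ^ ((4 * β * 2 ^ n - 1) * a) := by
  have hconj : s⁻¹ * r * s = r ^ (4 * β * 2 ^ n - 1 : ℤ) := by
    rw [h.conj, involution_pow_eq_zpow, ← zpow_neg_one, ← zpow_add, neg_add_eq_sub]
  rw [zpow_mul, ← hconj]
  simpa using (_root_.conj_zpow (a := s⁻¹)).symm

theorem kGroupRelations {n γ : ℕ} {g4 g5 : G} (h : MaxClassRelations (n + 2) α β r s)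
    (hp : InvolutionPair n γ r s g4 g5) :
    KGroupRelations n α β γ (kGroupGenerators n β r s g4 g5) := by
  have t_pow (a : ℕ) : (r ^ (4 : ℤ)) ^ a = r ^ (4 * a : ℤ) := by rw [zpow_mul, zpow_natCast]
  constructor <;> simp only [kGroupGenerators, inv_mul_mul_eq_self_iff]
  case conj_g2_g1 =>
    rw [← zpow_one_add, ← zpow_one r, h.conj_zpow, ← zpow_mul]
    exact h.zpow_eq_zpow 0 (by ring)
  case conj_g3_g1 =>
    rw [h.conj_zpow, ← zpow_add]
    exact h.zpow_eq_zpow (2 * β ^ 2 * 2 ^ n - 2 * β) (by ring)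
  case sq_g3 =>
    rw [← zpow_natCast, ← zpow_mul, ← zpow_neg]
    exact h.zpow_eq_zpow β (by push_cast; ring)
  case conj_t_g1 =>
    rw [h.conj_zpow, ← zpow_neg]
    exact h.zpow_eq_zpow (2 * β) (by ring)
  case pow_t =>
    rw [t_pow, ← zpow_zero r]
    exact h.zpow_eq_zpow 1 (by push_cast; ring)
  case sq_g1 =>
    rw [h.sq, t_pow, involution_pow_eq_zpow]
    exact h.zpow_eq_zpow 0 (by push_cast; ring)
  case sq_g2 =>
    rw [t_pow, ← zpow_natCast, ← zpow_add]
    exact h.zpow_eq_zpow (-β) (by push_cast; ring)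
  case conj_g5_g4 =>
    rw [hp.conj, t_pow, involution_pow_eq_zpow]
    congr 1
    exact h.zpow_eq_zpow 0 (by push_cast; ring)
  exacts [(Commute.refl r).zpow_right _, hp.commute_g4_s.symm, hp.commute_g4_r.symm,
    (hp.commute_g4_r.zpow_right _).symm, hp.sq_g4, hp.commute_g5_s.symm, hp.commute_g5_r.symm,
    (hp.commute_g5_r.zpow_right _).symm, hp.sq_g5, (Commute.refl r).zpow_right _,
    (Commute.refl r).zpow_zpow _ _, hp.commute_g4_r.zpow_right _, hp.commute_g5_r.zpow_right _]

-- In the semidihedral case `s * r` has the other admissible square, so one may assume `α` even.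
theorem isKGroup_of_involutionPair [Finite G] {n γ : ℕ} {g4 g5 : G}
    (h : MaxClassRelations (n + 2) α β r s) (hp : InvolutionPair n γ r s g4 g5)
    (hcard : Nat.card G = 2 ^ (n + 6)) (hγ : γ ≤ 1) : IsKGroup G n := by
  have isKGroup {α β : ℕ} {s : G} (h : MaxClassRelations (n + 2) α β r s)
      (hp : InvolutionPair n γ r s g4 g5) (hα : α ≤ 1) (hβ : β ≤ 1) (hαβ : α = 0 ∨ β = 0) :
      IsKGroup G n := by
    refine ⟨α, hα, β, hβ, γ, hγ, hαβ, (h.kGroupRelations hp).nonempty_mulEquiv ?_ hcard⟩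
    rw [eq_top_iff, ← hp.closure_eq_top]
    refine closure_mono ?_
    rintro _ (rfl | rfl | rfl | rfl)
    exacts [⟨.g1, rfl⟩, ⟨.g2, rfl⟩, ⟨.g4, rfl⟩, ⟨.g5, rfl⟩]
  by_cases hαβ : α % 2 = 0 ∨ β % 2 = 0
  · exact isKGroup (h.of_mod_two_eq (Nat.mod_mod α 2).symm (Nat.mod_mod β 2).symm) hp
      (by omega) (by omega) hαβ
  · exact isKGroup (h.mul_generator.of_mod_two_eq (α' := 0) (β' := 1) (by omega) (by omega))
      hp.mul_generator (by omega) le_rfl (Or.inl rfl)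

theorem closure_twisted_generators {r s x y w : G} (hgen : closure {s, r, x, y} = ⊤)
    (hw : w ∈ zpowers r) : closure {s * x, r, x * y * w, y * w} = ⊤ := by
  rw [eq_top_iff, ← hgen, closure_le]
  set A := closure {s * x, r, x * y * w, y * w}
  have hr : r ∈ A := subset_closure (by simp)
  have hwA : w ∈ A := zpowers_le.mpr hr hw
  have hy : y ∈ A := (mul_mem_cancel_right hwA).mp (subset_closure (by simp))
  have hx : x ∈ A :=
    (mul_mem_cancel_right hy).mp ((mul_mem_cancel_right hwA).mp (subset_closure (by simp)))
  have hs : s ∈ A := (mul_mem_cancel_right hx).mp (subset_closure (by simp))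
  rintro _ (rfl | rfl | rfl | rfl) <;> assumption

-- When `x ^ 2 = y ^ 2` is the central involution `z`, the square root `w = r ^ 2 ^ (n + 1)` of
-- `z` turns `x * y` and `y` into the involutions `x * y * w` and `y * w`.
theorem involutionPair_of_quaternion {n : ℕ} {x y : G} (h : MaxClassRelations (n + 2) α β r s)
    (hxr : Commute x r) (hxs : Commute x s) (hyr : Commute y r) (hys : Commute y s)
    (hx : x ^ 2 = r ^ 2 ^ (n + 2)) (hy : y ^ 2 = r ^ 2 ^ (n + 2))
    (hyx : y * x = r ^ 2 ^ (n + 2) * (x * y)) (hgen : closure {s, r, x, y} = ⊤) :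
    InvolutionPair n 1 r (s * x) (x * y * r ^ 2 ^ (n + 1)) (y * r ^ 2 ^ (n + 1)) := by
  have hw : (r ^ 2 ^ (n + 1)) ^ 2 = r ^ 2 ^ (n + 2) := by rw [← pow_mul, ← pow_succ]
  have hsw : r ^ 2 ^ (n + 1) * s = s * (r ^ 2 ^ (n + 1))⁻¹ := by
    rw [← h.conj_pow_of_even (Nat.even_pow.mpr ⟨even_two, by omega⟩)]
    group
  have hz := h.involution
  rw [← hw] at hx hy hyx hz
  have hwr : Commute (r ^ 2 ^ (n + 1)) r := (Commute.refl r).pow_left _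
  have hxw : Commute x (r ^ 2 ^ (n + 1)) := hxr.pow_right _
  have hyw : Commute y (r ^ 2 ^ (n + 1)) := hyr.pow_right _
  have hclosure := closure_twisted_generators hgen (npow_mem_zpowers r (2 ^ (n + 1)))
  generalize r ^ 2 ^ (n + 1) = w at *
  have hxyw : Commute (x * y) w := hxw.mul_left hyw
  have hxy : (x * y) ^ 2 = w ^ 2 := by
    calc (x * y) ^ 2 = x * (y * x) * y := by simp only [pow_two, mul_assoc]
      _ = (x * w ^ 2) * (x * y ^ 2) := by rw [hyx]; simp only [pow_two, mul_assoc]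
      _ = w ^ 2 * x ^ 2 * y ^ 2 := by rw [(hxw.pow_right 2).eq]; simp only [pow_two, mul_assoc]
      _ = w ^ 2 := by rw [hx, hy, ← pow_two, hz, one_mul]
  have hgs : Commute (y * w) (s * x) := by
    calc y * w * (s * x) = y * (w * s) * x := by simp only [mul_assoc]
      _ = (y * s) * (w⁻¹ * x) := by rw [hsw]; simp only [mul_assoc]
      _ = s * (y * x) * w⁻¹ := by rw [hys.eq, ← hxw.inv_right.eq]; simp only [mul_assoc]
      _ = s * (x * y) * w := by rw [hyx, ← (hxyw.pow_right 2).eq]; group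
      _ = s * x * (y * w) := by simp only [mul_assoc]
  refine ⟨(hxr.mul_left hyr).mul_left hwr, ?_, hyr.mul_left hwr, hgs, ?_, ?_, ?_, hclosure⟩
  · rw [mul_assoc]
    exact (hxs.mul_right (Commute.refl x)).mul_left hgs
  · rw [hxyw.mul_pow, hxy, ← pow_two, hz]
  · rw [hyw.mul_pow, hy, ← pow_two, hz]
  · rw [pow_one, ← hw, mul_assoc, inv_mul_eq_iff_eq_mul]
    calc y * w * (x * y * w) = y * (w * (x * y)) * w := by simp only [mul_assoc]
      _ = (y * x) * (y * w ^ 2) := by rw [← hxyw.eq]; simp only [pow_two, mul_assoc]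
      _ = x * y * (w * (w * y)) * w ^ 2 := by
        rw [hyx, ← (hxyw.pow_right 2).eq]; simp only [pow_two, mul_assoc]
      _ = x * y * w * (y * w * w ^ 2) := by rw [← hyw.eq]; simp only [mul_assoc]

theorem isKGroup_of_centralProduct [Finite G] {n : ℕ} {x y κ : G}
    (h : MaxClassRelations (n + 2) α β r s) (hxr : Commute x r) (hxs : Commute x s)
    (hyr : Commute y r) (hys : Commute y s) (hx : x ^ 2 = κ) (hy : y ^ 2 = κ)
    (hyx : y * x = κ * (x * y)) (hκ : κ = 1 ∨ κ = r ^ 2 ^ (n + 2))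
    (hgen : closure {s, r, x, y} = ⊤) (hcard : Nat.card G = 2 ^ (n + 6)) : IsKGroup G n := by
  rcases hκ with rfl | rfl
  · have hp : InvolutionPair n 0 r s x y :=
      ⟨hxr, hxs, hyr, hys, hx, hy, by rw [mul_assoc, hyx]; simp, hgen⟩
    exact h.isKGroup_of_involutionPair hp hcard zero_le_one
  · exact (h.mul_right_of_commute hxr hxs hx).isKGroup_of_involutionPair
      (h.involutionPair_of_quaternion hxr hxs hyr hys hx hy hyx hgen) hcard le_rfl

end MaxClassRelations

end Recognition

section Commutators

variable {G : Type*} [Group G] {N A B D : Subgroup G}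

theorem commutator_le_iff_map_le_centralizer [N.Normal] :
    ⁅A, B⁆ ≤ N ↔ A.map (QuotientGroup.mk' N) ≤ centralizer (B.map (QuotientGroup.mk' N)) := by
  rw [← commutator_eq_bot_iff_le_centralizer, ← map_commutator,
    Subgroup.map_eq_bot_iff, QuotientGroup.ker_mk']

theorem commutator_closure_le [N.Normal] {S T : Set G} (h : ∀ x ∈ S, ∀ y ∈ T, ⁅x, y⁆ ∈ N) :
    ⁅closure S, closure T⁆ ≤ N := by
  rw [commutator_le_iff_map_le_centralizer, MonoidHom.map_closure, MonoidHom.map_closure,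
    centralizer_closure, closure_le]
  rintro _ ⟨x, hx, rfl⟩
  rw [SetLike.mem_coe, mem_centralizer_iff_commutator_eq_one]
  rintro _ ⟨y, hy, rfl⟩
  rw [← map_commutatorElement, ← commutatorElement_inv, map_inv, inv_eq_one,
    QuotientGroup.mk'_apply, QuotientGroup.eq_one_iff]
  exact h x hx y hy

theorem commutator_sup_left_le [N.Normal] (hA : ⁅A, D⁆ ≤ N) (hB : ⁅B, D⁆ ≤ N) :
    ⁅A ⊔ B, D⁆ ≤ N := by
  rw [commutator_le_iff_map_le_centralizer] at *
  rw [Subgroup.map_sup]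
  exact sup_le hA hB

theorem commutator_commutator_le_of_rotate [N.Normal] (h₁ : ⁅⁅B, D⁆, A⁆ ≤ N)
    (h₂ : ⁅⁅D, A⁆, B⁆ ≤ N) : ⁅⁅A, B⁆, D⁆ ≤ N := by
  have hN (X : Subgroup G) : X ≤ N ↔ X.map (QuotientGroup.mk' N) = ⊥ := by
    rw [Subgroup.map_eq_bot_iff, QuotientGroup.ker_mk']
  simp only [hN, map_commutator] at *
  exact commutator_commutator_eq_bot_of_rotate h₁ h₂

theorem sup_zpowers_eq_of_relIndex_two (hBA : B ≤ A) (h : B.relIndex A = 2) {x : G} (hx : x ∈ A)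
    (hxB : x ∉ B) : B ⊔ zpowers x = A := by
  have hle : B ⊔ zpowers x ≤ A := sup_le hBA (zpowers_le.mpr hx)
  have hmul := relIndex_mul_relIndex B (B ⊔ zpowers x) A le_sup_left hle
  rcases (Nat.dvd_prime Nat.prime_two).mp (h ▸ Dvd.intro _ hmul) with h1 | h2
  · exact absurd (relIndex_eq_one.mp h1 (mem_sup_right (mem_zpowers x))) hxB
  · rw [h2, h, Nat.mul_eq_left two_ne_zero, relIndex_eq_one] at hmul
    exact le_antisymm hle hmul

theorem commutator_self_le_of_relIndex_le_two [N.Normal] (hBA : B ≤ A) (h0 : B.relIndex A ≠ 0)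
    (h2 : B.relIndex A ≤ 2) (h : ⁅B, A⁆ ≤ N) : ⁅A, A⁆ ≤ N := by
  by_cases hAB : A ≤ B
  · exact (commutator_mono hAB le_rfl).trans h
  obtain ⟨x, hx, hxB⟩ := SetLike.not_le_iff_exists.mp hAB
  have hidx : B.relIndex A = 2 := by
    have := mt relIndex_eq_one.mp hAB
    omega
  have hAx := sup_zpowers_eq_of_relIndex_two hBA hidx hx hxB
  have hxx : ⁅zpowers x, zpowers x⁆ ≤ N := by
    simp [zpowers_eq_closure, commutator_closure_le]
  have hxA : ⁅A, zpowers x⁆ ≤ N := by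
    refine (commutator_mono hAx.ge le_rfl).trans (commutator_sup_left_le ?_ hxx)
    exact (commutator_mono le_rfl (zpowers_le.mpr hx)).trans h
  refine (commutator_mono hAx.ge le_rfl).trans (commutator_sup_left_le h ?_)
  rwa [commutator_comm]

theorem four_le_relIndex_of_not_commutator_self_le [Finite G] [N.Normal] {m : ℕ}
    (hcard : Nat.card G = 2 ^ m) (hBA : B ≤ A) (h : ⁅B, A⁆ ≤ N) (hn : ¬ ⁅A, A⁆ ≤ N) :
    4 ≤ B.relIndex A := by
  have h2 : ¬ B.relIndex A ≤ 2 := fun hle =>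
    hn (commutator_self_le_of_relIndex_le_two hBA index_ne_zero_of_finite hle h)
  have h3 : B.relIndex A ≠ 3 := fun h3 => by
    have hdvd : 3 ∣ 2 ^ m := by
      rw [← h3, ← hcard]
      exact (relIndex_dvd_card B A).trans A.card_subgroup_dvd_card
    have := Nat.prime_three.dvd_of_dvd_pow hdvd
    omega
  omega

section Elements

variable {x y : G}

theorem commutatorElement_mem_of_sq_mem [N.Normal] (hx : x ^ 2 ∈ N) (hy : y ^ 2 ∈ N)
    (hxy : (x * y) ^ 2 ∈ N) : ⁅x, y⁆ ∈ N := by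
  have h : ⁅x, y⁆ = (x * y) ^ 2 * (y⁻¹ * (x ^ 2)⁻¹ * y⁻¹⁻¹) * (y ^ 2)⁻¹ := by
    simp only [commutatorElement_def, pow_two]
    group
  rw [h]
  exact mul_mem (mul_mem hxy (Normal.conj_mem inferInstance _ (inv_mem hx) _)) (inv_mem hy)

theorem commutator_sup_closure_pair_le [N.Normal] (hA : ⁅A, ⊤⁆ ≤ N) (hxy : ⁅x, y⁆ ∈ N) :
    ⁅A ⊔ closure {x, y}, A ⊔ closure {x, y}⁆ ≤ N := by
  have hyx : ⁅y, x⁆ ∈ N := commutatorElement_inv x y ▸ inv_mem hxy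
  have hxx : ⁅closure {x, y}, closure {x, y}⁆ ≤ N := commutator_closure_le <| by
    simp [hxy, hyx]
  refine commutator_sup_left_le ((commutator_mono le_rfl le_top).trans hA) ?_
  rw [commutator_comm]
  exact commutator_sup_left_le ((commutator_mono le_rfl le_top).trans hA) hxx

theorem commutatorElement_sq_mem (h : ⁅A, ⊤⁆ ≤ N) (hx : x ^ 2 ∈ A)
    (hxy : ⁅x, y⁆ ∈ A) : ⁅x, y⁆ ^ 2 ∈ N := by
  have hxxy : ⁅⁅x, y⁆, x⁆ ∈ N := h (commutator_mem_commutator hxy (mem_top x))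
  have hx2y : ⁅x ^ 2, y⁆ ∈ N := h (commutator_mem_commutator hx (mem_top y))
  convert mul_mem hxxy hx2y using 1
  simp only [commutatorElement_def, pow_two]
  group

theorem relIndex_sup_zpowers_eq_two [N.Normal] (hx : x ^ 2 ∈ N) (hxN : x ∉ N) :
    N.relIndex (N ⊔ zpowers x) = 2 := by
  rw [relIndex_sup_left, ← QuotientGroup.ker_mk' N, relIndex_ker, MonoidHom.map_zpowers,
    Nat.card_zpowers]
  refine orderOf_eq_prime ?_ fun h => hxN ((QuotientGroup.eq_one_iff x).mp h)
  rw [← map_pow]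
  exact (QuotientGroup.eq_one_iff _).mpr hx

end Elements

theorem normal_of_le_center (h : N ≤ center G) : N.Normal := by
  rw [← commutator_top_right_le_iff, commutator_top_right_eq_bot_iff_le_center.mpr h]
  exact bot_le

theorem exists_mem_center_orderOf_eq {p : ℕ} [Fact p.Prime] [Finite G] (hG : IsPGroup p G)
    [N.Normal] (hN : N ≠ ⊥) : ∃ z ∈ N, z ∈ center G ∧ orderOf z = p := by
  have hp : p ∣ Nat.card N :=
    (hG.to_subgroup N).card_eq_or_dvd.resolve_left fun h => hN (card_eq_one.mp h)
  have hG' : IsPGroup p (ConjAct G) := hG.of_equiv ConjAct.toConjAct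
  obtain ⟨b, hb, hb1⟩ :=
    hG'.exists_fixed_point_of_prime_dvd_card_of_fixed_point N hp (a := 1) fun g => smul_one g
  have hbc : (b : G) ∈ center G := mem_center_iff.mpr fun g => by
    rw [← mul_inv_eq_iff_eq_mul]
    exact congrArg Subtype.val (hb (ConjAct.toConjAct g))
  have hdvd : p ∣ orderOf (b : G) := hG.dvd_orderOf fun h => hb1 (Subtype.ext h.symm)
  exact ⟨b ^ (orderOf (b : G) / p), pow_mem b.2 _, pow_mem hbc _,
    orderOf_pow_orderOf_div (orderOf_pos (b : G)).ne' hdvd⟩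

end Commutators

section MaximalClass

variable {M : Type*} [Group M]

theorem card_commutator_of_index_eq_four {k : ℕ} (hcard : Nat.card M = 2 ^ (k + 2))
    (hidx : (commutator M).index = 4) : Nat.card (commutator M) = 2 ^ k := by
  have := (commutator M).card_mul_index
  rw [hidx, hcard, pow_add] at this
  exact Nat.eq_of_mul_eq_mul_right (by norm_num) this

theorem index_zpowers_eq_two {k : ℕ} {r : M} (hcard : Nat.card M = 2 ^ (k + 1))
    (hr : orderOf r = 2 ^ k) : (zpowers r).index = 2 := by
  have := (zpowers r).card_mul_index
  rw [Nat.card_zpowers, hr, hcard, pow_succ] at this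
  exact Nat.eq_of_mul_eq_mul_left (by positivity) this

theorem card_quotient_zpowers {k : ℕ} {z : M} (hcard : Nat.card M = 2 ^ (k + 1))
    (hz : orderOf z = 2) : Nat.card (M ⧸ zpowers z) = 2 ^ k := by
  have := card_eq_card_quotient_mul_card_subgroup (zpowers z)
  rw [hcard, Nat.card_zpowers, hz, pow_succ] at this
  exact (Nat.eq_of_mul_eq_mul_right two_pos this).symm

theorem exists_notMem_of_index_two {A : Subgroup M} (hA : A.index = 2) : ∃ s, s ∉ A :=
  not_forall.mp fun h => by simp [(eq_top_iff' A).mpr h] at hA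

theorem commute_of_le_zpowers_sup_center {A : Subgroup M} {r : M}
    (hA : A ≤ zpowers r ⊔ center M) {a b : M} (ha : a ∈ A) (hb : b ∈ A) : Commute a b := by
  obtain ⟨_, ⟨i, rfl⟩, w, hw, rfl⟩ := mem_sup_of_normal_right.mp (hA ha)
  obtain ⟨_, ⟨j, rfl⟩, v, hv, rfl⟩ := mem_sup_of_normal_right.mp (hA hb)
  have hv' (g : M) : Commute g v := mem_center_iff.mp hv g
  have hw' (g : M) : Commute w g := (mem_center_iff.mp hw g).symm
  exact (((Commute.refl r).zpow_zpow i j).mul_right (hv' _)).mul_left (hw' _)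

theorem commutatorElement_mem_zpowers {r s a : M} (hd : Commute ⁅s, r⁆ r)
    (ha : a ∈ zpowers r ⊔ center M) : ⁅s, a⁆ ∈ zpowers ⁅s, r⁆ := by
  obtain ⟨_, ⟨i, rfl⟩, w, hw, rfl⟩ := mem_sup_of_normal_right.mp ha
  refine ⟨i, ?_⟩
  have hdr : ⁅s, r⁆ * r = s * r * s⁻¹ := by group
  have hws : s⁻¹ * w⁻¹ = w⁻¹ * s⁻¹ := mem_center_iff.mp (inv_mem hw) s⁻¹
  calc ⁅s, r⁆ ^ i = (⁅s, r⁆ * r) ^ i * (r ^ i)⁻¹ := by rw [hd.mul_zpow]; group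
    _ = s * (r ^ i * w) * (w⁻¹ * s⁻¹) * (r ^ i)⁻¹ := by rw [hdr, conj_zpow]; group
    _ = ⁅s, r ^ i * w⁆ := by rw [← hws]; group

theorem commutator_eq_zpowers_commutatorElement [Finite M] {A : Subgroup M} [A.Normal] {r s : M}
    (hr : r ∈ A) (hA : A ≤ zpowers r ⊔ center M) (hs : A ⊔ zpowers s = ⊤) :
    commutator M = zpowers ⁅s, r⁆ := by
  have hdA : ⁅s, r⁆ ∈ A := commutator_le_right ⊤ A (commutator_mem_commutator (mem_top s) hr)
  have hA_comm {a b : M} (ha : a ∈ A) (hb : b ∈ A) : ⁅a, b⁆ ∈ zpowers ⁅s, r⁆ := by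
    rw [(commute_of_le_zpowers_sup_center hA ha hb).commutator_eq]
    exact one_mem _
  have hsA {a : M} (ha : a ∈ A) : ⁅s, a⁆ ∈ zpowers ⁅s, r⁆ :=
    commutatorElement_mem_zpowers (commute_of_le_zpowers_sup_center hA hdA hr) (hA ha)
  have hnormal : (zpowers ⁅s, r⁆).Normal := by
    rw [← normalizer_eq_top_iff, eq_top_iff, ← hs, sup_le_iff, zpowers_le]
    refine ⟨fun a ha => mem_normalizer_fintype fun d hd => ?_,
      mem_normalizer_fintype fun d hd => ?_⟩ <;>
      refine (mul_mem_cancel_right (inv_mem hd)).mp ?_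
    · exact hA_comm ha (zpowers_le.mpr hdA hd)
    · exact hsA (zpowers_le.mpr hdA hd)
  refine le_antisymm ?_ (zpowers_le.mpr (commutator_mem_commutator (mem_top s) (mem_top r)))
  rw [_root_.commutator_def, ← hs, ← closure_eq A, zpowers_eq_closure, ← Subgroup.closure_union]
  refine commutator_closure_le ?_
  rintro x (hx | rfl) y (hy | rfl)
  · exact hA_comm hx hy
  · exact commutatorElement_inv y x ▸ inv_mem (hsA hx)
  · exact hsA hy
  · exact commutatorElement_self y ▸ one_mem _

theorem orderOf_eq_two_mul_of_mem_zpowers {k : ℕ} {r z : M} [(zpowers z).Normal]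
    (hz : orderOf z = 2) (hr : orderOf (r : M ⧸ zpowers z) = 2 ^ k) (hzr : z ∈ zpowers r) :
    orderOf r = 2 ^ (k + 1) := by
  have hfact : Fact (Nat.Prime 2) := ⟨Nat.prime_two⟩
  refine orderOf_eq_prime_pow (fun h1 => ?_) ?_
  · obtain ⟨l, rfl⟩ := hzr
    have hl : ((2 ^ k : ℕ) : ℤ) ∣ l := by
      rw [← hr, orderOf_dvd_iff_zpow_eq_one, ← QuotientGroup.mk_zpow, QuotientGroup.eq_one_iff]
      exact mem_zpowers _
    obtain ⟨c, rfl⟩ := hl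
    have hz1 : r ^ (((2 ^ k : ℕ) : ℤ) * c) = 1 := by rw [zpow_mul, zpow_natCast, h1, one_zpow]
    exact absurd (orderOf_eq_one_iff.mpr hz1) (hz.trans_ne (by norm_num))
  · have hrz : r ^ 2 ^ k ∈ zpowers z := by
      rw [← QuotientGroup.eq_one_iff, QuotientGroup.mk_pow, ← hr, pow_orderOf_eq_one]
    have hdvd : orderOf (r ^ 2 ^ k) ∣ 2 := by
      have := Subgroup.orderOf_dvd_natCard _ hrz
      rwa [Nat.card_zpowers, hz] at this
    rw [pow_succ, pow_mul, orderOf_dvd_iff_pow_eq_one.mp hdvd]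

theorem sq_mem_zpowers_of_mem_sup {r z x : M} (hzc : z ∈ center M) (hz : z ^ 2 = 1)
    (hx : x ∈ zpowers r ⊔ zpowers z) : x ^ 2 ∈ zpowers r := by
  have hnormal : (zpowers z).Normal := normal_of_le_center (zpowers_le.mpr hzc)
  obtain ⟨_, ⟨i, rfl⟩, _, ⟨j, rfl⟩, rfl⟩ := mem_sup_of_normal_right.mp hx
  have hrz : Commute r z := mem_center_iff.mp hzc r
  have hzj : (z ^ j) ^ 2 = 1 := by
    rw [← zpow_natCast, zpow_comm, zpow_natCast, hz, one_zpow]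
  rw [(hrz.zpow_zpow i j).mul_pow, hzj, mul_one]
  exact pow_mem (zpow_mem_zpowers r i) 2

theorem mem_zpowers_sq_of_sq_eq_one {d z : M} (hz : z ^ 2 = 1) (hd : 4 ∣ orderOf d)
    (hzd : z ∈ zpowers d) : z ∈ zpowers (d ^ 2) := by
  obtain ⟨m, rfl⟩ := hzd
  have hm : (4 : ℤ) ∣ m * 2 := by
    refine (Int.natCast_dvd_natCast.mpr hd).trans ?_
    rw [orderOf_dvd_iff_zpow_eq_one, zpow_mul, zpow_ofNat, hz]
  obtain ⟨j, rfl⟩ : (2 : ℤ) ∣ m := by omega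
  refine ⟨j, ?_⟩
  simp only [zpow_mul, zpow_ofNat]

-- `⟨⁅s, r⁆⟩ = [M, M]` has more than two elements, so its involution `z` is a power of `⁅s, r⁆ ^ 2`,
-- which is a power of `r` because `⁅s, r⁆ ∈ ⟨r, z⟩`.
theorem mem_zpowers_of_orderOf_quotient [Finite M] {k : ℕ} {z : M}
    (hcard : Nat.card M = 2 ^ (k + 4)) (hidx : (commutator M).index = 4) (hz : orderOf z = 2)
    (hzc : z ∈ center M) (hzM : z ∈ commutator M) [(zpowers z).Normal] {r : M}
    (hr : orderOf (r : M ⧸ zpowers z) = 2 ^ (k + 2)) : z ∈ zpowers r := by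
  let A := (zpowers (r : M ⧸ zpowers z)).comap (QuotientGroup.mk' (zpowers z))
  have hAi : A.index = 2 := by
    rw [index_comap_of_surjective _ (QuotientGroup.mk'_surjective _),
      index_zpowers_eq_two (card_quotient_zpowers hcard hz) hr]
  have hz2 : z ^ 2 = 1 := orderOf_dvd_iff_pow_eq_one.mp hz.dvd
  have hAn : A.Normal := normal_of_index_eq_two hAi
  have hrA : r ∈ A := mem_zpowers (r : M ⧸ zpowers z)
  have hA : A = zpowers r ⊔ zpowers z := by
    have := comap_map_eq (QuotientGroup.mk' (zpowers z)) (zpowers r)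
    rwa [QuotientGroup.ker_mk', MonoidHom.map_zpowers] at this
  obtain ⟨s, hs⟩ := exists_notMem_of_index_two hAi
  have hM : commutator M = zpowers ⁅s, r⁆ := by
    refine commutator_eq_zpowers_commutatorElement hrA ?_ ?_
    · exact hA.trans_le (sup_le_sup_left (zpowers_le.mpr hzc) _)
    · exact sup_zpowers_eq_of_relIndex_two le_top (by rwa [relIndex_top_right]) (mem_top s) hs
  have hd : orderOf ⁅s, r⁆ = 2 ^ (k + 2) := by
    rw [← Nat.card_zpowers, ← hM, card_commutator_of_index_eq_four hcard hidx]
  have hd_sq : ⁅s, r⁆ ^ 2 ∈ zpowers r := by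
    have hdA : ⁅s, r⁆ ∈ A := commutator_le_right ⊤ A (commutator_mem_commutator (mem_top s) hrA)
    exact sq_mem_zpowers_of_mem_sup hzc hz2 (hA ▸ hdA)
  have h4 : 4 ∣ orderOf ⁅s, r⁆ := hd ▸ pow_dvd_pow 2 (Nat.le_add_left 2 k)
  exact zpowers_le.mpr hd_sq (mem_zpowers_sq_of_sq_eq_one hz2 h4 (hM ▸ hzM))

theorem exists_orderOf_eq_two_pow (k : ℕ) : ∀ (M : Type*) [Group M] [Finite M],
    Nat.card M = 2 ^ (k + 3) → (commutator M).index = 4 → ∃ r : M, orderOf r = 2 ^ (k + 2) := by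
  have hfact : Fact (Nat.Prime 2) := ⟨Nat.prime_two⟩
  induction k with
  | zero =>
    intro M _ _ hcard hidx
    by_contra! hno
    have horder (g : M) : orderOf g ∣ 2 := by
      obtain ⟨j, hj, hj'⟩ := (Nat.dvd_prime_pow Nat.prime_two).mp (hcard ▸ orderOf_dvd_natCard g)
      have h4 := hno g
      have h8 := hno (g ^ 2)
      rw [orderOf_pow] at h8
      interval_cases j <;> simp_all
    have habelian : IsMulCommutative M := ⟨⟨Commute.of_orderOf_dvd_two horder⟩⟩
    have := card_commutator_of_index_eq_four (k := 1) hcard hidx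
    simp [commutator_eq_bot] at this
  | succ k ih =>
    intro M _ _ hcard hidx
    have hne : commutator M ≠ ⊥ := fun h => by
      have := card_commutator_of_index_eq_four hcard hidx
      rw [h, card_bot] at this
      exact (Nat.one_lt_two_pow (by omega)).ne this
    obtain ⟨z, hzM, hzc, hz⟩ := exists_mem_center_orderOf_eq (IsPGroup.of_card hcard) hne
    have hnormal : (zpowers z).Normal := normal_of_le_center (zpowers_le.mpr hzc)
    have hidxQ : (commutator (M ⧸ zpowers z)).index = 4 := by
      rw [_root_.commutator_def, ← map_top_of_surjective _ (QuotientGroup.mk'_surjective _),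
        ← map_commutator, ← _root_.commutator_def,
        index_map_eq _ (QuotientGroup.mk'_surjective _), hidx]
      rwa [QuotientGroup.ker_mk', zpowers_le]
    obtain ⟨r, hr⟩ := ih (M ⧸ zpowers z) (card_quotient_zpowers hcard hz) hidxQ
    obtain ⟨r, rfl⟩ := QuotientGroup.mk_surjective r
    exact ⟨r, orderOf_eq_two_mul_of_mem_zpowers hz hr
      (mem_zpowers_of_orderOf_quotient hcard hidx hz hzc hzM hr)⟩

-- With `s⁻¹ * r * s = r ^ e`, the element `d = r ^ (e - 1)` generates `[M, M]`, hence has order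
-- `2 ^ (k + 1)`, while `d ^ (e + 1) = 1` and `d ^ j = 1` if `s ^ 2 = r ^ j`.
theorem exists_maxClassRelations [Finite M] {k : ℕ} (hcard : Nat.card M = 2 ^ (k + 3))
    (hidx : (commutator M).index = 4) :
    ∃ (r s : M) (α β : ℕ), orderOf r = 2 ^ (k + 2) ∧ zpowers r ⊔ zpowers s = ⊤ ∧
      MaxClassRelations (k + 1) α β r s := by
  obtain ⟨r, hr⟩ := exists_orderOf_eq_two_pow k M hcard hidx
  have hi : (zpowers r).index = 2 := index_zpowers_eq_two hcard hr
  have hn : (zpowers r).Normal := normal_of_index_eq_two hi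
  obtain ⟨s, hs⟩ := exists_notMem_of_index_two hi
  obtain ⟨e, he⟩ : ∃ e : ℕ, r ^ e = s⁻¹ * r * s :=
    mem_powers_iff_mem_zpowers.mpr (by simpa using hn.conj_mem r (mem_zpowers r) s⁻¹)
  obtain ⟨j, hj⟩ : ∃ j : ℕ, r ^ j = s ^ 2 :=
    mem_powers_iff_mem_zpowers.mpr (sq_mem_of_index_two hi s)
  have hconj (i : ℕ) : (r ^ e) ^ i = s⁻¹ * r ^ i * s := by
    rw [he]
    simpa using (conj_pow (a := s⁻¹) (b := r) (i := i))
  have hd : ⁅s⁻¹, r⁆ = r ^ e * r⁻¹ := by rw [he]; group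
  have hd_pow (i : ℕ) : (r ^ e * r⁻¹) ^ i = s⁻¹ * r ^ i * s * (r ^ i)⁻¹ := by
    rw [((Commute.refl r).pow_left e).inv_right.mul_pow, hconj, inv_pow]
  have hrs : zpowers r ⊔ zpowers s = ⊤ :=
    sup_zpowers_eq_of_relIndex_two le_top (by rwa [relIndex_top_right]) (mem_top s) hs
  have hd_order : orderOf (r ^ e * r⁻¹) = 2 ^ (k + 1) := by
    rw [← card_commutator_of_index_eq_four hcard hidx, ← hd, ← Nat.card_zpowers,
      ← commutator_eq_zpowers_commutatorElement (mem_zpowers r) le_sup_left]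
    rwa [zpowers_inv]
  obtain ⟨β, hβ⟩ : 2 ^ (k + 1) ∣ e + 1 := by
    have hee : s⁻¹ * r ^ e * s = r := by
      calc s⁻¹ * r ^ e * s = (s ^ 2)⁻¹ * r * s ^ 2 := by rw [he, pow_two]; group
        _ = r := by rw [← hj]; group
    have her : s⁻¹ * r ^ (e + 1) * s = r ^ (e + 1) := by
      calc s⁻¹ * r ^ (e + 1) * s = s⁻¹ * r ^ e * s * (s⁻¹ * r * s) := by rw [pow_succ]; group
        _ = r ^ (e + 1) := by rw [hee, ← he, ← pow_succ']
    rw [← hd_order, orderOf_dvd_iff_pow_eq_one, hd_pow, her, mul_inv_cancel]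
  obtain ⟨α, hα⟩ : 2 ^ (k + 1) ∣ j := by
    rw [← hd_order, orderOf_dvd_iff_pow_eq_one, hd_pow, hj]
    group
  refine ⟨r, s, α, β, hr, hrs, ?_, ?_, ?_⟩
  · rw [← hr, pow_orderOf_eq_one]
  · rw [← pow_mul, ← hβ, pow_succ', inv_mul_cancel_left, he]
  · rw [← pow_mul, ← hα, hj]

theorem eq_one_or_eq_pow_of_mem_center [Finite M] {k : ℕ} (hcard : Nat.card M = 2 ^ (k + 3))
    (hidx : (commutator M).index = 4) {r κ : M} (hr : orderOf r = 2 ^ (k + 2))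
    (hκc : κ ∈ center M) (hκ : κ ^ 2 = 1) : κ = 1 ∨ κ = r ^ 2 ^ (k + 1) := by
  have hκr : κ ∈ zpowers r := by
    by_contra hn
    have htop : zpowers r ⊔ zpowers κ = ⊤ := sup_zpowers_eq_of_relIndex_two le_top
      (by rw [relIndex_top_right, index_zpowers_eq_two hcard hr]) (mem_top κ) hn
    have hle : (⊤ : Subgroup M) ≤ zpowers r ⊔ center M :=
      htop.ge.trans (sup_le_sup_left (zpowers_le.mpr hκc) _)
    have hbot : commutator M = ⊥ := le_bot_iff.mp <| commutator_le.mpr fun a _ b _ =>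
      commutatorElement_eq_one_iff_commute.mpr
        (commute_of_le_zpowers_sup_center hle (mem_top a) (mem_top b))
    rw [hbot, index_bot, hcard, pow_add] at hidx
    omega
  obtain ⟨j, rfl⟩ := mem_powers_iff_mem_zpowers.mpr hκr
  obtain ⟨c, rfl⟩ : 2 ^ (k + 1) ∣ j := by
    refine Nat.dvd_of_mul_dvd_mul_right two_pos ?_
    rw [← pow_succ, ← hr]
    exact orderOf_dvd_of_pow_eq_one (by simpa [pow_mul] using hκ)
  have hinv : (r ^ 2 ^ (k + 1)) ^ 2 = 1 := by rw [← pow_mul, ← pow_succ, ← hr, pow_orderOf_eq_one]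
  simp only [pow_mul]
  obtain ⟨d, rfl | rfl⟩ := c.even_or_odd'
  · left
    rw [pow_mul, hinv, one_pow]
  · right
    rw [pow_succ, pow_mul, hinv, one_pow, one_mul]

end MaximalClass

section CoprimeAction

variable {G : Type*} [Group G] {φ : MulAut G} {p : ℕ} {A B D N : Subgroup G}

/-- The subgroup `C_G(φ)` of elements fixed by the automorphism `φ`. -/
def fixedSubgroup (φ : MulAut G) : Subgroup G := φ.toMonoidHom.eqLocus (MonoidHom.id G)

/-- The subgroup `[A, φ]` generated by the elements `u⁻¹ φ(u)` with `u ∈ A`. Thus `φ` acts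
trivially on `A` modulo `B` exactly when `[A, φ] ≤ B`. -/
def autCommutator (φ : MulAut G) (A : Subgroup G) : Subgroup G :=
  closure ((fun u => u⁻¹ * φ u) '' A)

/-- `φ` is an automorphism of `G` with `φ ^ p = 1`, where `p` is a prime not dividing the order
of `G`. -/
structure IsCoprimeAut (p : ℕ) (φ : MulAut G) : Prop where
  prime : p.Prime
  not_dvd_card : ¬ p ∣ Nat.card G
  pow_eq_one : φ ^ p = 1

theorem mem_fixedSubgroup {g : G} : g ∈ fixedSubgroup φ ↔ φ g = g := Iff.rfl

theorem inv_mul_apply_mem_autCommutator {u : G} (hu : u ∈ A) : u⁻¹ * φ u ∈ autCommutator φ A :=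
  subset_closure ⟨u, hu, rfl⟩

theorem autCommutator_le : autCommutator φ A ≤ B ↔ ∀ u ∈ A, u⁻¹ * φ u ∈ B := by
  rw [autCommutator, closure_le, Set.image_subset_iff]
  rfl

theorem autCommutator_mono (h : A ≤ B) : autCommutator φ A ≤ autCommutator φ B :=
  closure_mono (Set.image_mono h)

theorem autCommutator_le_self (hA : Set.MapsTo φ A A) : autCommutator φ A ≤ A :=
  autCommutator_le.mpr fun _ hu => mul_mem (inv_mem hu) (hA hu)

theorem le_fixedSubgroup_iff : A ≤ fixedSubgroup φ ↔ autCommutator φ A ≤ ⊥ := by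
  rw [autCommutator_le]
  exact forall₂_congr fun u _ => by
    rw [mem_fixedSubgroup, mem_bot, inv_mul_eq_one, eq_comm]

theorem mapsTo_fixedSubgroup : Set.MapsTo φ (fixedSubgroup φ) (fixedSubgroup φ) :=
  fun _ ha => congrArg φ ha

theorem mapsTo_of_characteristic (A : Subgroup G) [A.Characteristic] : Set.MapsTo φ A A :=
  characteristic_iff_le_comap.mp inferInstance φ

theorem mapsTo_sup (hA : Set.MapsTo φ A A) (hB : Set.MapsTo φ B B) :
    Set.MapsTo φ ↑(A ⊔ B) ↑(A ⊔ B) :=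
  sup_le (c := (A ⊔ B).comap φ.toMonoidHom) (fun _ ha => mem_sup_left (hA ha))
    (fun _ hb => mem_sup_right (hB hb))

theorem mapsTo_autCommutator (hA : Set.MapsTo φ A A) :
    Set.MapsTo φ (autCommutator φ A) (autCommutator φ A) := by
  have h : autCommutator φ A ≤ (autCommutator φ A).comap φ.toMonoidHom :=
    autCommutator_le.mpr fun u hu => by
      simpa using inv_mul_apply_mem_autCommutator (φ := φ) (hA hu)
  exact h

instance autCommutator_top_normal (φ : MulAut G) : (autCommutator φ ⊤).Normal := by
  have h (h : G) : autCommutator φ ⊤ ≤ (autCommutator φ ⊤).comap (MulAut.conj h).toMonoidHom :=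
    autCommutator_le.mpr fun g _ => by
      have := mul_mem (inv_mul_apply_mem_autCommutator (φ := φ) (mem_top (g * h⁻¹)))
        (inv_mem (inv_mul_apply_mem_autCommutator (φ := φ) (mem_top h⁻¹)))
      simpa [mul_assoc] using this
  exact ⟨fun n hn g => h g hn⟩

theorem commutator_autCommutator_le [N.Normal] (hD : D ≤ fixedSubgroup φ)
    (h : autCommutator φ ⁅D, A⁆ ≤ N) : ⁅D, autCommutator φ A⁆ ≤ N := by
  rw [← D.closure_eq]
  refine commutator_closure_le ?_
  rintro c hc _ ⟨g, hg, rfl⟩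
  have hcg := autCommutator_le.mp h _ (commutator_mem_commutator hc hg)
  rw [map_commutatorElement, mem_fixedSubgroup.mp (hD hc)] at hcg
  convert Normal.conj_mem inferInstance _ hcg g⁻¹ using 1
  simp only [commutatorElement_def]
  group

theorem commutator_autCommutator_eq_bot (hD : D ≤ fixedSubgroup φ)
    (h : ⁅D, A⁆ ≤ fixedSubgroup φ) : ⁅D, autCommutator φ A⁆ = ⊥ :=
  le_bot_iff.mp (commutator_autCommutator_le hD (le_fixedSubgroup_iff.mp h))

theorem commutatorElement_eq_of_commute {x y x' y' : G} (hx : Commute (x⁻¹ * x') y')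
    (hy : Commute x (y⁻¹ * y')) : ⁅x, y⁆ = ⁅x', y'⁆ := by
  symm
  calc ⁅x', y'⁆ = x * ((x⁻¹ * x') * y' * (x⁻¹ * x')⁻¹) * x⁻¹ * y'⁻¹ := by
        rw [commutatorElement_def]; group
    _ = x * y' * x⁻¹ * y'⁻¹ := by rw [hx.mul_inv_cancel]
    _ = x * y * ((y⁻¹ * y') * x⁻¹ * (y⁻¹ * y')⁻¹) * y⁻¹ := by group
    _ = ⁅x, y⁆ := by rw [hy.symm.inv_right.mul_inv_cancel, commutatorElement_def]

/-- The three subgroups lemma for `A`, `B` and `⟨φ⟩` in `G ⋊ ⟨φ⟩`. -/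
theorem autCommutator_commutator_le [N.Normal] (hB : Set.MapsTo φ B B)
    (hA : ⁅autCommutator φ A, B⁆ ≤ N) (hAB : ⁅A, autCommutator φ B⁆ ≤ N) :
    autCommutator φ ⁅A, B⁆ ≤ N := by
  let π := QuotientGroup.mk' N
  have hπ {x y : G} (hxy : ⁅x, y⁆ ∈ N) : Commute (π x) (π y) := by
    rwa [← commutatorElement_eq_one_iff_commute, ← map_commutatorElement, QuotientGroup.mk'_apply,
      QuotientGroup.eq_one_iff]
  have key : ⁅A, B⁆ ≤ π.eqLocus (π.comp φ.toMonoidHom) := by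
    rw [commutator_le]
    intro a ha b hb
    have hv := hπ (hA (commutator_mem_commutator (inv_mul_apply_mem_autCommutator ha) (hB hb)))
    have hw := hπ (hAB (commutator_mem_commutator ha (inv_mul_apply_mem_autCommutator hb)))
    change π ⁅a, b⁆ = π (φ ⁅a, b⁆)
    simp only [map_commutatorElement]
    exact commutatorElement_eq_of_commute hv hw
  exact autCommutator_le.mpr fun u hu => QuotientGroup.eq.mp (key hu)

namespace IsCoprimeAut

variable (h : IsCoprimeAut p φ)
include h

theorem card_modEq_card_inter_fixedSubgroup [Finite G] {X : Set G} (hX : Set.MapsTo φ X X) :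
    Nat.card X ≡ Nat.card ↑(X ∩ fixedSubgroup φ) [MOD p] := by
  classical
  have := Fintype.ofFinite X
  have : Fact p.Prime := ⟨h.prime⟩
  let f : Function.End X := hX.restrict φ X X
  have hpow (k : ℕ) (x : X) : ((f ^ k) x : G) = (φ ^ k) x := by
    induction k with
    | zero => rfl
    | succ k ih => rw [pow_succ', pow_succ']; exact congrArg φ ih
  have hf : f ^ p ^ 1 = 1 := by
    funext x
    rw [Subtype.ext_iff, hpow, pow_one, h.pow_eq_one]
    rfl
  have hcard := Equiv.Perm.card_fixedPoints_modEq hf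
  rw [← Nat.card_eq_fintype_card, ← Nat.card_eq_fintype_card] at hcard
  have e : {x : X // f x = x} ≃ ↑(X ∩ fixedSubgroup φ) :=
    (Equiv.subtypeEquivRight fun _ => Subtype.ext_iff).trans
      (Equiv.subtypeSubtypeEquivSubtypeInter (· ∈ X) (· ∈ fixedSubgroup φ))
  exact hcard.trans (congrArg (· % p) (Nat.card_congr e))

theorem coprime_card (A : Subgroup G) : p.Coprime (Nat.card A) :=
  (h.prime.coprime_iff_not_dvd).mpr fun hp => h.not_dvd_card (hp.trans A.card_subgroup_dvd_card)

theorem relIndex_modEq_one [Finite G] (hA : Set.MapsTo φ A A) (hB : Set.MapsTo φ B B)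
    (hBA : B ≤ A) (hfix : A ⊓ fixedSubgroup φ ≤ B) : B.relIndex A ≡ 1 [MOD p] := by
  have hinter : (A : Set G) ∩ fixedSubgroup φ = (B : Set G) ∩ fixedSubgroup φ :=
    Set.Subset.antisymm (fun x hx => ⟨hfix hx, hx.2⟩) fun x hx => ⟨hBA hx.1, hx.2⟩
  have hAB : Nat.card A ≡ Nat.card B [MOD p] :=
    (h.card_modEq_card_inter_fixedSubgroup hA).trans
      (hinter ▸ (h.card_modEq_card_inter_fixedSubgroup hB).symm)
  rw [← relIndex_bot_left, ← relIndex_bot_left, ← relIndex_mul_relIndex ⊥ B A bot_le hBA] at hAB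
  exact Nat.ModEq.cancel_left_of_coprime (h.coprime_card B) (by rwa [← relIndex_bot_left, mul_one])

theorem mem_sup_of_inv_mul_apply_mem [Finite G] (hD : Set.MapsTo φ D D) {u : G}
    (hu : u⁻¹ * φ u ∈ D) : u ∈ fixedSubgroup φ ⊔ D := by
  have hX : Set.MapsTo φ {x | u⁻¹ * x ∈ D} {x | u⁻¹ * x ∈ D} := fun x hx => by
    simpa [mul_assoc] using mul_mem hu (hD hx)
  have hcard : Nat.card {x | u⁻¹ * x ∈ D} = Nat.card D :=
    Nat.card_congr ((Equiv.mulLeft u⁻¹).subtypeEquiv fun _ => Iff.rfl)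
  have hmod := h.card_modEq_card_inter_fixedSubgroup hX
  rw [hcard] at hmod
  have hne : Nat.card ↑({x | u⁻¹ * x ∈ D} ∩ fixedSubgroup φ) ≠ 0 := fun h0 =>
    h.prime.coprime_iff_not_dvd.mp (h.coprime_card D) (Nat.modEq_zero_iff_dvd.mp (h0 ▸ hmod))
  obtain ⟨⟨c, hcD, hc⟩⟩ := (Nat.card_ne_zero.mp hne).1
  have hcu : c⁻¹ * u ∈ D := by simpa using inv_mem (show u⁻¹ * c ∈ D from hcD)
  simpa using mul_mem_sup hc hcu

theorem inv_mul_apply_mem_iff [Finite G] [N.Normal] (hN : Set.MapsTo φ N N) {u : G} :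
    u⁻¹ * φ u ∈ N ↔ u ∈ fixedSubgroup φ ⊔ N := by
  refine ⟨h.mem_sup_of_inv_mul_apply_mem hN, fun hu => ?_⟩
  obtain ⟨c, hc, n, hn, rfl⟩ := mem_sup_of_normal_right.mp hu
  rw [map_mul, mem_fixedSubgroup.mp hc]
  simpa [mul_assoc] using mul_mem (inv_mem hn) (hN hn)

theorem autCommutator_le_iff [Finite G] [N.Normal] (hN : Set.MapsTo φ N N) :
    autCommutator φ A ≤ N ↔ A ≤ fixedSubgroup φ ⊔ N :=
  autCommutator_le.trans (forall₂_congr fun _ _ => h.inv_mul_apply_mem_iff hN)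

theorem fixedSubgroup_sup_autCommutator [Finite G] :
    fixedSubgroup φ ⊔ autCommutator φ ⊤ = (⊤ : Subgroup G) :=
  top_le_iff.mp ((h.autCommutator_le_iff (mapsTo_autCommutator fun _ _ => mem_top _)).mp le_rfl)

theorem commutator_top_le [Finite G] [N.Normal] (hC : ⁅fixedSubgroup φ, A⁆ ≤ N)
    (hQ : ⁅autCommutator φ ⊤, A⁆ ≤ N) : ⁅(⊤ : Subgroup G), A⁆ ≤ N :=
  h.fixedSubgroup_sup_autCommutator ▸ commutator_sup_left_le hC hQ

theorem autCommutator_le_of_le_sup [Finite G] [N.Normal] (hN : Set.MapsTo φ N N)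
    (hA : autCommutator φ A ≤ fixedSubgroup φ ⊔ N) : autCommutator φ A ≤ N := by
  refine (h.autCommutator_le_iff hN).mpr fun u hu => ?_
  have := h.mem_sup_of_inv_mul_apply_mem (mapsTo_sup mapsTo_fixedSubgroup hN)
    (autCommutator_le.mp hA u hu)
  rwa [← sup_assoc, sup_idem] at this

theorem add_one_le_relIndex [Finite G] [B.Normal] (hA : Set.MapsTo φ A A)
    (hB : Set.MapsTo φ B B) (hBA : B ≤ A) (hn : ¬ autCommutator φ A ≤ B) :
    p + 1 ≤ B.relIndex A := by
  rw [h.autCommutator_le_iff hB] at hn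
  set D := A ⊓ fixedSubgroup φ ⊔ B
  have hDA : D ≤ A := sup_le inf_le_left hBA
  have hD : Set.MapsTo φ D D :=
    mapsTo_sup (fun x hx => ⟨hA hx.1, mapsTo_fixedSubgroup hx.2⟩) hB
  have hmod := h.relIndex_modEq_one hA hD hDA le_sup_left
  have hne : D.relIndex A ≠ 1 := fun h1 =>
    hn ((relIndex_eq_one.mp h1).trans (sup_le_sup_right inf_le_right B))
  have hpos : D.relIndex A ≠ 0 := index_ne_zero_of_finite
  have hB0 : B.relIndex A ≠ 0 := index_ne_zero_of_finite
  have hle : p ≤ D.relIndex A - 1 :=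
    Nat.le_of_dvd (by omega) ((Nat.modEq_iff_dvd' (by omega)).mp hmod.symm)
  have := Nat.le_of_dvd (Nat.pos_of_ne_zero hB0)
    (Dvd.intro_left _ (relIndex_mul_relIndex B D A le_sup_right hDA))
  omega

theorem eq_of_relIndex_lt [Finite G] [B.Normal] (hA : Set.MapsTo φ A A) (hB : Set.MapsTo φ B B)
    (hBA : B ≤ A) (hAD : A ≤ D) (hn : ¬ autCommutator φ A ≤ B)
    (hidx : B.relIndex D < 2 * (p + 1)) : A = D := by
  have hlow := h.add_one_le_relIndex hA hB hBA hn
  have hmul := relIndex_mul_relIndex B A D hBA hAD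
  have hpos : A.relIndex D ≠ 0 := index_ne_zero_of_finite
  refine hAD.antisymm (relIndex_eq_one.mp ?_)
  by_contra hne
  have : 2 ≤ A.relIndex D := by omega
  nlinarith

theorem three_le [Finite G] (h2 : 2 ∣ Nat.card G) : 3 ≤ p := by
  have hne : p ≠ 2 := fun h' => h.not_dvd_card (h' ▸ h2)
  have := h.prime.two_le
  omega

theorem eq_top_of_lt [Finite G] [D.Normal] (hA : Set.MapsTo φ A A) (hD : Set.MapsTo φ D D)
    (hCD : fixedSubgroup φ ≤ D) (hDA : D < A) (hidx : D.index < 2 * (p + 1)) : A = ⊤ := by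
  refine h.eq_of_relIndex_lt hA hD hDA.le le_top (fun hle => hDA.not_ge ?_)
    (by rwa [relIndex_top_right])
  exact ((h.autCommutator_le_iff hD).mp hle).trans (sup_le hCD le_rfl)

open scoped IsMulCommutative in
theorem sq_mem_of_index_eq_four [Finite G] (h2 : 2 ∣ Nat.card G) (hG : commutator G ≤ D)
    (hD : Set.MapsTo φ D D) (hCD : fixedSubgroup φ ≤ D) (h4 : D.index = 4) (g : G) :
    g ^ 2 ∈ D := by
  have hn : D.Normal := .of_commutator_le G hG
  have : IsMulCommutative (G ⧸ D) := Normal.quotient_commutative_iff_commutator_le.mpr hG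
  let E := ((powMonoidHom 2).comp (QuotientGroup.mk' D)).ker
  have mem_E {x : G} : x ∈ E ↔ x ^ 2 ∈ D := by
    rw [MonoidHom.mem_ker, MonoidHom.comp_apply, powMonoidHom_apply, ← map_pow,
      QuotientGroup.mk'_apply, QuotientGroup.eq_one_iff]
  have hE : Set.MapsTo φ E E := fun x hx =>
    mem_E.mpr (map_pow φ x 2 ▸ hD (mem_E.mp hx))
  have hDE : D < E := by
    refine lt_of_le_of_ne (fun x hx => mem_E.mpr (pow_mem hx 2)) fun heq => ?_
    have hsq (x : G) (hx : x ^ 2 ∈ D) : x ∈ D := heq ▸ mem_E.mpr hx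
    have htop : D = ⊤ := (eq_top_iff' D).mpr fun x => hsq _ <| hsq _ <| by
      rw [← pow_mul]
      simpa only [h4] using D.pow_index_mem x
    simp [htop] at h4
  have htop := h.eq_top_of_lt hE hD hCD hDE (by have := h.three_le h2; omega)
  exact mem_E.mp (htop ▸ mem_top g)

open scoped IsMulCommutative in
theorem sq_mem_of_mem_autCommutator [Finite G] (hG : commutator G ≤ N)
    (hN : Set.MapsTo φ N N) (h4 : (fixedSubgroup φ ⊔ N).index = 4) {x : G}
    (hx : x ∈ autCommutator φ ⊤) : x ^ 2 ∈ N := by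
  have hn : N.Normal := .of_commutator_le G hG
  have : IsMulCommutative (G ⧸ N) := Normal.quotient_commutative_iff_commutator_le.mpr hG
  have h2 : 2 ∣ Nat.card G :=
    (show 2 ∣ (fixedSubgroup φ ⊔ N).index by omega).trans (index_dvd_card _)
  suffices autCommutator φ ⊤ ≤ ((powMonoidHom 2).comp (QuotientGroup.mk' N)).ker by
    have hxN := MonoidHom.mem_ker.mp (this hx)
    rwa [MonoidHom.comp_apply, powMonoidHom_apply, ← map_pow, QuotientGroup.mk'_apply,
      QuotientGroup.eq_one_iff] at hxN
  refine autCommutator_le.mpr fun u _ => ?_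
  have hu := (h.inv_mul_apply_mem_iff hN).mpr <| h.sq_mem_of_index_eq_four h2
    (hG.trans le_sup_right) (mapsTo_sup mapsTo_fixedSubgroup hN) le_sup_left h4 u
  rw [← QuotientGroup.eq_one_iff, ← QuotientGroup.mk'_apply] at hu
  rw [MonoidHom.mem_ker, ← hu]
  simp only [MonoidHom.comp_apply, powMonoidHom_apply, map_mul, map_inv, map_pow]

end IsCoprimeAut

theorem IsCoprimeAut.exists_orbit_of_index_eq_four [Finite G] (h : IsCoprimeAut 3 φ)
    (hG : commutator G ≤ N) (hN : Set.MapsTo φ N N) (h4 : (fixedSubgroup φ ⊔ N).index = 4) :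
    ∃ x ∈ autCommutator φ ⊤, φ (φ x) = (x * φ x)⁻¹ ∧
      autCommutator φ ⊤ ≤ N ⊔ closure {x, φ x} := by
  set D := fixedSubgroup φ ⊔ N
  have hD : Set.MapsTo φ D D := mapsTo_sup mapsTo_fixedSubgroup hN
  have hDn : D.Normal := .of_commutator_le G (hG.trans le_sup_right)
  have hne : D ≠ ⊤ := fun htop => by simp [htop] at h4
  obtain ⟨g, hg⟩ := not_forall.mp (mt (eq_top_iff' D).mpr hne)
  have hxD : g⁻¹ * φ g ∉ D := fun hx =>
    hg (sup_le (c := D) le_sup_left le_rfl ((h.inv_mul_apply_mem_iff hD).mp hx))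
  have hx3 : φ (φ (g⁻¹ * φ g)) = (g⁻¹ * φ g * φ (g⁻¹ * φ g))⁻¹ := by
    have hφ3 : φ (φ (φ g)) = g := DFunLike.congr_fun h.pow_eq_one g
    simp [hφ3]
  refine ⟨g⁻¹ * φ g, inv_mul_apply_mem_autCommutator (mem_top g), hx3, ?_⟩
  generalize g⁻¹ * φ g = x at hxD hx3 ⊢
  have hx : x ∈ closure {x, φ x} := subset_closure (by simp)
  have hy : φ x ∈ closure {x, φ x} := subset_closure (by simp)
  have hE : Set.MapsTo φ (closure {x, φ x}) (closure {x, φ x}) := by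
    suffices closure {x, φ x} ≤ (closure {x, φ x}).comap φ.toMonoidHom from this
    rw [closure_le, Set.pair_subset_iff]
    refine ⟨hy, ?_⟩
    change φ (φ x) ∈ closure {x, φ x}
    exact hx3 ▸ inv_mem (mul_mem hx hy)
  have htop : D ⊔ closure {x, φ x} = ⊤ := h.eq_top_of_lt (mapsTo_sup hD hE) hD le_sup_left
    (lt_of_le_of_ne le_sup_left fun heq => hxD (heq ▸ mem_sup_right hx)) (by omega)
  have hn : (N ⊔ closure {x, φ x}).Normal := .of_commutator_le G (hG.trans le_sup_left)
  rw [h.autCommutator_le_iff (mapsTo_sup hN hE), ← sup_assoc]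
  exact htop.ge

end CoprimeAction

section LowerCentralSeries

variable {G : Type*} [Group G] {φ : MulAut G} {p : ℕ}

local notation "Γ" => Subgroup.lowerCentralSeries (⊤ : Subgroup G)

theorem commutator_lowerCentralSeries_le {i j k : ℕ} (hk : k ≤ i + j + 1) :
    ⁅Γ i, Γ j⁆ ≤ Γ k := by
  refine le_trans ?_ (Subgroup.lowerCentralSeries_antitone _ hk)
  clear hk
  induction i generalizing j with
  | zero =>
    rw [commutator_comm, zero_add]
    exact commutator_mono le_rfl le_top
  | succ i ih =>
    apply commutator_commutator_le_of_rotate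
    · rw [commutator_comm ⊤, commutator_comm]
      exact (ih (j := j + 1)).trans (Subgroup.lowerCentralSeries_antitone _ (by omega))
    · rw [commutator_comm (Γ j), show i + 1 + j + 1 = i + j + 1 + 1 by omega]
      exact commutator_mono ih le_rfl

theorem lowerCentralSeries_eq_bot_of_le_succ [Group.IsNilpotent G] {i : ℕ}
    (h : Γ i ≤ Γ (i + 1)) : Γ i = ⊥ := by
  have hstep (k : ℕ) : Γ i ≤ Γ (i + k) := by
    induction k with
    | zero => exact le_rfl
    | succ k ih => exact h.trans (commutator_mono ih le_rfl)
  rw [eq_bot_iff, ← Subgroup.lowerCentralSeries_nilpotencyClass (G := G)]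
  exact (hstep _).trans (Subgroup.lowerCentralSeries_antitone _ (Nat.le_add_left _ _))

theorem not_lowerCentralSeries_le_succ [Group.IsNilpotent G] {i : ℕ}
    (hi : i < Group.nilpotencyClass G) : ¬ Γ i ≤ Γ (i + 1) := fun hle =>
  hi.not_ge (Subgroup.lowerCentralSeries_eq_bot_iff_nilpotencyClass_le.mp
    (lowerCentralSeries_eq_bot_of_le_succ hle))

theorem exists_lowerCentralSeries_exponents [Finite G] [Group.IsNilpotent G] {q m : ℕ}
    (hq : q.Prime) (hcard : Nat.card G = q ^ m) :
    ∃ e : ℕ → ℕ, (∀ i, (Γ (i + 1)).relIndex (Γ i) = q ^ e i) ∧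
      (∀ i < Group.nilpotencyClass G, 1 ≤ e i) ∧
      ∀ s : Finset ℕ, ∑ i ∈ s, (e i - 1) + Group.nilpotencyClass G ≤ m := by
  have hpow (i : ℕ) : ∃ k, (Γ (i + 1)).relIndex (Γ i) = q ^ k := by
    have hdvd : (Γ (i + 1)).relIndex (Γ i) ∣ q ^ m :=
      hcard ▸ (relIndex_dvd_card _ _).trans (card_subgroup_dvd_card _)
    obtain ⟨k, -, hk⟩ := (Nat.dvd_prime_pow hq).mp hdvd
    exact ⟨k, hk⟩
  choose e he using hpow
  set c := Group.nilpotencyClass G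
  have hzero (i : ℕ) : e i = 0 ↔ c ≤ i := by
    rw [← Subgroup.lowerCentralSeries_eq_bot_iff_nilpotencyClass_le,
      ← pow_eq_one_iff_right (n := e i) hq.ne_one, ← he, relIndex_eq_one]
    exact ⟨lowerCentralSeries_eq_bot_of_le_succ, fun h => h ▸ bot_le⟩
  have hindex (k : ℕ) : (Γ k).index = q ^ ∑ i ∈ Finset.range k, e i := by
    induction k with
    | zero => simp
    | succ k ih =>
      rw [Finset.sum_range_succ, pow_add, ← ih, ← he, mul_comm,
        relIndex_mul_index (Subgroup.lowerCentralSeries_antitone _ k.le_succ)]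
  have hsum : ∑ i ∈ Finset.range c, e i = m := by
    have h := hindex c
    rw [Subgroup.lowerCentralSeries_nilpotencyClass, index_bot, hcard] at h
    exact (Nat.pow_right_injective hq.two_le h).symm
  have hpos (i : ℕ) (hi : i < c) : 1 ≤ e i :=
    Nat.one_le_iff_ne_zero.mpr fun h => ((hzero i).mp h).not_gt hi
  refine ⟨e, he, hpos, fun s => ?_⟩
  calc ∑ i ∈ s, (e i - 1) + c ≤ ∑ i ∈ Finset.range c, (e i - 1) + ∑ i ∈ Finset.range c, 1 := by
        rw [Finset.sum_const, Finset.card_range, smul_eq_mul, mul_one]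
        gcongr ?_ + _
        refine Finset.sum_le_sum_of_ne_zero fun i _ hi => Finset.mem_range.mpr ?_
        exact not_le.mp fun hc => hi (by simp [(hzero i).mpr hc])
    _ = m := by
        rw [← Finset.sum_add_distrib, ← hsum]
        exact Finset.sum_congr rfl fun i hi => Nat.sub_add_cancel (hpos i (Finset.mem_range.mp hi))

theorem exists_exponents_of_nilpotencyClass_eq [Finite G] [Group.IsNilpotent G] {m : ℕ}
    (hm : 8 ≤ m) (hcard : Nat.card G = 2 ^ m) (hclass : Group.nilpotencyClass G = m - 3) :
    ∃ e : ℕ → ℕ, (∀ i, (Γ (i + 1)).relIndex (Γ i) = 2 ^ e i) ∧ e 0 ≤ 4 ∧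
      (∀ i, 1 ≤ i → e 0 + e i ≤ 5) ∧ ∀ i, 2 ≤ i → e 0 + e 1 + e i ≤ 6 := by
  obtain ⟨e, he, hpos, hsum⟩ :=
    exists_lowerCentralSeries_exponents (G := G) Nat.prime_two hcard
  rw [hclass] at hpos hsum
  have h1 : 1 ≤ e 1 := hpos 1 (by omega)
  have h0 : e 0 ≤ 4 := by
    have := hsum {0}
    rw [Finset.sum_singleton] at this
    omega
  refine ⟨e, he, h0, fun i hi => ?_, fun i hi => ?_⟩
  · have := hsum {0, i}
    rw [Finset.sum_pair (by omega)] at this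
    omega
  · have := hsum {0, 1, i}
    rw [Finset.sum_insert (by simp; omega), Finset.sum_pair (by omega)] at this
    have := hpos 0 (by omega)
    omega

theorem autCommutator_lowerCentralSeries_le (h : autCommutator φ ⊤ ≤ Γ 1) (i : ℕ) :
    autCommutator φ (Γ i) ≤ Γ (i + 1) := by
  induction i with
  | zero => exact h
  | succ i ih =>
    refine autCommutator_commutator_le (fun _ _ => mem_top _) (commutator_mono ih le_rfl) ?_
    exact (commutator_mono le_rfl h).trans (commutator_lowerCentralSeries_le (by omega))

theorem commutator_fixedSubgroup_autCommutator_le (h₁ : autCommutator φ (Γ 1) ≤ Γ 2) :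
    ⁅fixedSubgroup φ, autCommutator φ ⊤⁆ ≤ Γ 2 :=
  commutator_autCommutator_le le_rfl
    ((autCommutator_mono (commutator_mono le_top le_rfl)).trans h₁)

theorem commutator_lowerCentralSeries_one_zpowers_le {x : G}
    (h2 : (Γ 2).relIndex (Γ 1) = 2) (hx : x ^ 2 ∈ Γ 1) (hx2 : x ^ 2 ∉ Γ 2) :
    ⁅Γ 1, zpowers x⁆ ≤ Γ 3 := by
  have hΓ : Γ 2 ≤ Γ 1 := Subgroup.lowerCentralSeries_antitone _ one_le_two
  rw [← sup_zpowers_eq_of_relIndex_two hΓ h2 hx hx2]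
  refine commutator_sup_left_le (commutator_mono le_rfl le_top) ?_
  rw [zpowers_eq_closure, zpowers_eq_closure]
  exact commutator_closure_le (by simp [commutatorElement_eq_one_iff_commute.mpr])

namespace IsCoprimeAut

variable [Finite G] (h : IsCoprimeAut p φ)
include h

theorem lowerCentralSeries_le_fixedSubgroup [Group.IsNilpotent G] {j : ℕ}
    (ht : ∀ i, j ≤ i → autCommutator φ (Γ i) ≤ Γ (i + 1)) : Γ j ≤ fixedSubgroup φ := by
  have hbot : Γ (max j (Group.nilpotencyClass G)) ≤ fixedSubgroup φ := by
    rw [Subgroup.lowerCentralSeries_eq_bot_iff_nilpotencyClass_le.mpr (le_max_right _ _)]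
    exact bot_le
  refine Nat.decreasingInduction' (P := fun k => Γ k ≤ fixedSubgroup φ) (fun k _ hjk ih => ?_)
    (le_max_left _ _) hbot
  have hk : autCommutator φ (Γ k) ≤ fixedSubgroup φ ⊔ ⊥ := by
    rw [sup_bot_eq]
    exact (ht k hjk).trans ih
  exact le_fixedSubgroup_iff.mpr (h.autCommutator_le_of_le_sup (mapsTo_of_characteristic ⊥) hk)

theorem commutator_lowerCentralSeries_autCommutator_le (h₁ : autCommutator φ (Γ 1) ≤ Γ 2)
    (hQ : ⁅Γ 1, autCommutator φ ⊤⁆ ≤ Γ 3) (i : ℕ) :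
    ⁅Γ (i + 1), autCommutator φ ⊤⁆ ≤ Γ (i + 3) ∧ autCommutator φ (Γ (i + 1)) ≤ Γ (i + 2) := by
  set Q := autCommutator φ ⊤
  have hCQ : ⁅fixedSubgroup φ, Q⁆ ≤ Γ 2 := commutator_fixedSubgroup_autCommutator_le h₁
  have hTQ : ⁅⊤, Q⁆ ≤ ⁅Q, Q⁆ ⊔ Γ 2 :=
    h.commutator_top_le (hCQ.trans le_sup_right) le_sup_left
  induction i with
  | zero => exact ⟨hQ, h₁⟩
  | succ i ih =>
    have hQi : ⁅⁅Q, Γ (i + 1)⁆, ⊤⁆ ≤ Γ (i + 4) :=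
      commutator_mono ((commutator_comm _ _).trans_le ih.1) le_rfl
    have hQQ : ⁅⁅Q, Q⁆, Γ (i + 1)⁆ ≤ Γ (i + 4) :=
      commutator_commutator_le_of_rotate ((commutator_mono le_rfl le_top).trans hQi)
        ((commutator_mono (commutator_comm _ _).le le_top).trans hQi)
    refine ⟨commutator_commutator_le_of_rotate ((commutator_mono hTQ le_rfl).trans ?_) hQi,
      autCommutator_commutator_le (fun _ _ => mem_top _) (commutator_mono ih.2 le_rfl) ih.1⟩
    exact commutator_sup_left_le hQQ (commutator_lowerCentralSeries_le (by omega))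

theorem lowerCentralSeries_one_le_autCommutator_sup
    (hn : ¬ autCommutator φ (Γ 1) ≤ Γ 2) (hidx : (Γ 2).relIndex (Γ 1) < 2 * (p + 1)) :
    Γ 1 ≤ autCommutator φ (Γ 1) ⊔ Γ 2 := by
  have h₁ := mapsTo_of_characteristic (φ := φ) (Γ 1)
  have h₂ := mapsTo_of_characteristic (φ := φ) (Γ 2)
  set E := autCommutator φ (Γ 1) ⊔ Γ 2
  have hE : E ≤ Γ 1 :=
    sup_le (autCommutator_le_self h₁) (Subgroup.lowerCentralSeries_antitone _ one_le_two)
  have hnE : ¬ autCommutator φ E ≤ Γ 2 := fun hle => hn <| h.autCommutator_le_of_le_sup h₂ <|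
    le_sup_left.trans ((h.autCommutator_le_iff h₂).mp hle)
  exact (h.eq_of_relIndex_lt (mapsTo_sup (mapsTo_autCommutator h₁) h₂) h₂ le_sup_right hE hnE
    hidx).ge

theorem commutator_autCommutator_lowerCentralSeries_one_le_center (hC : Γ 2 ≤ fixedSubgroup φ)
    (hΓ : Γ 1 ≤ autCommutator φ (Γ 1) ⊔ Γ 2) :
    ⁅Γ 1, autCommutator φ (Γ 1)⁆ ≤ center G := by
  set N := autCommutator φ (Γ 1)
  have hQ : ⁅Γ 2, autCommutator φ ⊤⁆ = ⊥ :=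
    commutator_autCommutator_eq_bot hC ((commutator_le_left _ _).trans hC)
  have hCN : ⁅fixedSubgroup φ, N⁆ = ⊥ := commutator_autCommutator_eq_bot le_rfl <|
    (commutator_mono le_top le_rfl).trans <| (commutator_comm _ _).trans_le hC
  have hN : N ≤ Γ 1 := autCommutator_le_self (mapsTo_of_characteristic _)
  have hNN : ⁅N, N⁆ ≤ Γ 2 := commutator_mono hN le_top
  refine (commutator_mono hΓ le_rfl).trans (commutator_sup_left_le ?_ ?_)
  · rw [← commutator_top_right_eq_bot_iff_le_center, commutator_comm, ← le_bot_iff]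
    refine h.commutator_top_le ?_ ((commutator_comm _ _).trans_le ?_)
    · rw [commutator_comm]
      exact commutator_commutator_le_of_rotate (by simp [commutator_comm N, hCN]) (by simp [hCN])
    · exact (commutator_mono hNN le_rfl).trans hQ.le
  · exact (commutator_mono le_rfl (autCommutator_mono le_top)).trans (hQ.trans_le bot_le)

theorem lowerCentralSeries_four_le_five (hC : Γ 2 ≤ fixedSubgroup φ)
    (hn : ¬ autCommutator φ (Γ 1) ≤ Γ 2) (hidx : (Γ 2).relIndex (Γ 1) < 2 * (p + 1)) :
    Γ 4 ≤ Γ 5 := by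
  have hΓ := h.lowerCentralSeries_one_le_autCommutator_sup hn hidx
  have hcenter := h.commutator_autCommutator_lowerCentralSeries_one_le_center hC hΓ
  set N := autCommutator φ (Γ 1)
  set Q := autCommutator φ ⊤
  have hQ : ⁅Q, Γ 2⁆ = ⊥ := (commutator_comm _ _).trans <|
    commutator_autCommutator_eq_bot hC ((commutator_le_left _ _).trans hC)
  have hCN : ⁅fixedSubgroup φ, N⁆ = ⊥ := commutator_autCommutator_eq_bot le_rfl <|
    (commutator_mono le_top le_rfl).trans <| (commutator_comm _ _).trans_le hC
  have hQN : ⁅Q, N⁆ ≤ Γ 2 := (commutator_comm _ _).trans_le <|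
    commutator_mono (autCommutator_le_self (mapsTo_of_characteristic _)) le_top
  have h₂ : Γ 2 ≤ ⁅Q, N⁆ ⊔ Γ 3 := by
    have : (⁅Q, N⁆ ⊔ Γ 3).Normal := commutator_top_right_le_iff.mp <|
      (commutator_mono (sup_le hQN (commutator_le_left _ _)) le_rfl).trans le_sup_right
    refine (commutator_mono hΓ le_rfl).trans (commutator_sup_left_le ?_ le_sup_right)
    rw [commutator_comm]
    exact h.commutator_top_le (hCN.trans_le bot_le) le_sup_left
  have h₃ : Γ 3 ≤ center G ⊔ Γ 4 := by
    refine (commutator_mono h₂ le_rfl).trans (commutator_sup_left_le ?_ le_sup_right)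
    rw [commutator_comm]
    refine (h.commutator_top_le ?_ ((commutator_mono le_rfl hQN).trans (hQ.trans_le bot_le))).trans
      (le_sup_left (a := center G))
    rw [commutator_comm]
    exact commutator_commutator_le_of_rotate
      (by simp [commutator_comm N, hCN])
      ((commutator_mono (commutator_mono le_top le_top) le_rfl).trans hcenter)
  refine (commutator_mono h₃ le_rfl).trans (commutator_sup_left_le ?_ le_rfl)
  rw [commutator_top_right_eq_bot_iff_le_center.mpr le_rfl]
  exact bot_le

theorem fixedSubgroup_inf_autCommutator_le_center (hC : Γ 1 ≤ fixedSubgroup φ) :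
    fixedSubgroup φ ⊓ autCommutator φ ⊤ ≤ center G := by
  have hCQ : ⁅fixedSubgroup φ, autCommutator φ ⊤⁆ = ⊥ :=
    commutator_autCommutator_eq_bot le_rfl ((commutator_mono le_top le_rfl).trans hC)
  rw [← commutator_top_right_eq_bot_iff_le_center, commutator_comm, ← le_bot_iff]
  refine h.commutator_top_le ((commutator_mono le_rfl inf_le_right).trans hCQ.le) ?_
  rw [commutator_comm]
  exact (commutator_mono inf_le_left le_rfl).trans hCQ.le

end IsCoprimeAut

theorem sq_eq_one_and_mul_pow_six_eq_one {x y κ : G} (hκ : Commute κ x)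
    (hyx : y * x = κ * (x * y)) (hy : y ^ 2 = x ^ 2) (hxy : (x * y) ^ 2 = (x ^ 2)⁻¹) :
    κ ^ 2 = 1 ∧ κ * x ^ 6 = 1 := by
  constructor
  · have hcomm : x ^ 2 * y = κ ^ 2 * (x ^ 2 * y) :=
      calc x ^ 2 * y = y * x ^ 2 := by rw [← hy]; group
        _ = y * x * x := by rw [pow_two, mul_assoc]
        _ = κ * (x * κ) * (x * y) := by rw [hyx, mul_assoc, mul_assoc, hyx]; group
        _ = κ ^ 2 * (x ^ 2 * y) := by rw [← hκ.eq]; simp only [pow_two, mul_assoc]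
    exact (right_eq_mul.mp hcomm)
  · calc κ * x ^ 6 = κ * x * x * x ^ 2 * x ^ 2 := by group
      _ = x * (κ * (x * y)) * y * x ^ 2 := by rw [hκ.eq, ← hy]; group
      _ = (x * y) ^ 2 * x ^ 2 := by rw [← hyx]; simp only [pow_two, mul_assoc]
      _ = 1 := by rw [hxy, inv_mul_cancel]

theorem IsCoprimeAut.exists_quaternion_generators [Finite G] (h : IsCoprimeAut 3 φ)
    (hC : Γ 1 ≤ fixedSubgroup φ) (h4 : (fixedSubgroup φ).index = 4) :
    ∃ x y κ : G, x ∈ autCommutator φ ⊤ ∧ y ∈ autCommutator φ ⊤ ∧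
      κ ∈ fixedSubgroup φ ⊓ autCommutator φ ⊤ ∧ κ ^ 2 = 1 ∧ x ^ 2 = κ ∧ y ^ 2 = κ ∧
      y * x = κ * (x * y) ∧ fixedSubgroup φ ⊔ closure {x, y} = ⊤ := by
  have h4' : (fixedSubgroup φ ⊔ Γ 1).index = 4 := by rwa [sup_eq_left.mpr hC]
  obtain ⟨x, hx, hφy, hQ⟩ :=
    h.exists_orbit_of_index_eq_four le_rfl (mapsTo_of_characteristic _) h4'
  have hsq : φ (x ^ 2) = x ^ 2 :=
    hC (h.sq_mem_of_mem_autCommutator le_rfl (mapsTo_of_characteristic _) h4' hx)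
  have hy : φ x ∈ autCommutator φ ⊤ := mapsTo_autCommutator (fun _ _ => mem_top _) hx
  generalize hxy : φ x = y at hφy hQ hy
  have hy2 : y ^ 2 = x ^ 2 := by rw [← hxy, ← map_pow, hsq]
  have hxy2 : (x * y) ^ 2 = (x ^ 2)⁻¹ := by
    rw [← inv_inv ((x * y) ^ 2), ← inv_pow, ← hφy, ← map_pow, hy2, hsq]
  have hκ : ⁅y, x⁆ ∈ fixedSubgroup φ ⊓ autCommutator φ ⊤ :=
    ⟨hC (commutator_mem_commutator (mem_top y) (mem_top x)),
      commutator_le_left _ _ (commutator_mem_commutator hy (mem_top x))⟩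
  have hκx : Commute ⁅y, x⁆ x :=
    (mem_center_iff.mp (h.fixedSubgroup_inf_autCommutator_le_center hC hκ) x).symm
  have hyx : y * x = ⁅y, x⁆ * (x * y) := by rw [commutatorElement_def]; group
  obtain ⟨hκ2, hκ6⟩ := sq_eq_one_and_mul_pow_six_eq_one hκx hyx hy2 hxy2
  have hcop : (Nat.card G).Coprime 3 :=
    (h.prime.coprime_iff_not_dvd.mpr h.not_dvd_card).symm
  have hx4 : x ^ 4 = 1 := (powCoprime hcop).injective <| by
    calc (x ^ 4) ^ 3 = (x ^ 6) ^ 2 := by group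
      _ = 1 := by rw [eq_inv_of_mul_eq_one_right hκ6, inv_pow, hκ2, inv_one]
      _ = 1 ^ 3 := (one_pow 3).symm
  have hxκ : x ^ 2 = ⁅y, x⁆ := by
    rw [eq_inv_of_mul_eq_one_left hκ6, eq_inv_iff_mul_eq_one,
      show x ^ 2 * x ^ 6 = (x ^ 4) ^ 2 by group, hx4, one_pow]
  refine ⟨x, y, ⁅y, x⁆, hx, hy, hκ, hκ2, hxκ, hy2.trans hxκ, hyx, ?_⟩
  rw [eq_top_iff, ← h.fixedSubgroup_sup_autCommutator]
  exact sup_le le_sup_left (hQ.trans (sup_le_sup_right hC _))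

namespace IsCoprimeAut

variable [Finite G] (h : IsCoprimeAut p φ)
include h

theorem lowerCentralSeries_one_le_sup_center (hC : Γ 1 ≤ fixedSubgroup φ) :
    Γ 1 ≤ ⁅fixedSubgroup φ, fixedSubgroup φ⁆ ⊔ center G := by
  have hn : (fixedSubgroup φ).Normal := .of_commutator_le G hC
  set C := fixedSubgroup φ
  set Q := autCommutator φ ⊤
  have hCQ : ⁅C, Q⁆ = ⊥ :=
    commutator_autCommutator_eq_bot le_rfl ((commutator_mono le_top le_rfl).trans hC)
  have hQQ : ⁅Q, Q⁆ ≤ center G :=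
    (le_inf ((commutator_mono le_top le_top).trans hC) (commutator_le_left Q Q)).trans
      (h.fixedSubgroup_inf_autCommutator_le_center hC)
  refine h.commutator_top_le ?_ ?_ <;> rw [commutator_comm]
  · refine h.commutator_top_le le_sup_left ?_
    rw [commutator_comm, hCQ]
    exact bot_le
  · exact h.commutator_top_le (hCQ.trans_le bot_le) (hQQ.trans le_sup_right)

theorem structure_of_lowerCentralSeries_one_le_fixedSubgroup {m : ℕ}
    (hcard : Nat.card G = 2 ^ m) (hp : 3 ≤ p) (hC : Γ 1 ≤ fixedSubgroup φ) (hφ : φ ≠ 1)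
    (h16 : (Γ 1).index ≤ 16) (hΓ : (Γ 1).index = 16 → (Γ 2).relIndex (Γ 1) = 2)
    (h23 : ¬ Γ 2 ≤ Γ 3) :
    p = 3 ∧ (fixedSubgroup φ).index = 4 ∧ ⁅fixedSubgroup φ, fixedSubgroup φ⁆ = Γ 1 ∧
      (Γ 1).relIndex (fixedSubgroup φ) = 4 := by
  have hn : (fixedSubgroup φ).Normal := .of_commutator_le G hC
  set C := fixedSubgroup φ
  have hΓC := h.lowerCentralSeries_one_le_sup_center hC
  have h2 : Γ 2 ≤ ⁅⁅C, C⁆, ⊤⁆ := by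
    refine (commutator_mono hΓC le_rfl).trans (commutator_sup_left_le le_rfl ?_)
    rw [commutator_top_right_eq_bot_iff_le_center.mpr le_rfl]
    exact bot_le
  have hCC : ¬ ⁅C, C⁆ ≤ Γ 2 := fun hle => h23 (h2.trans (commutator_mono hle le_rfl))
  have hindex : p + 1 ≤ C.index := by
    rw [← relIndex_top_right]
    refine h.add_one_le_relIndex (fun _ _ => mem_top _) mapsTo_fixedSubgroup le_top fun hle => hφ ?_
    ext g
    exact (sup_idem C).le ((h.autCommutator_le_iff mapsTo_fixedSubgroup).mp hle (mem_top g))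
  have hrel : 4 ≤ (Γ 1).relIndex C :=
    four_le_relIndex_of_not_commutator_self_le hcard hC (commutator_mono le_rfl le_top) hCC
  have hmul : (Γ 1).relIndex C * C.index = (Γ 1).index := relIndex_mul_index hC
  have hC4 : C.index = 4 := by nlinarith
  have hR4 : (Γ 1).relIndex C = 4 := by nlinarith
  refine ⟨by omega, hC4, ?_, hR4⟩
  have hCΓ : ⁅C, C⁆ ≤ Γ 1 := commutator_mono le_top le_top
  have hmul2 := relIndex_mul_relIndex (Γ 2) ⁅C, C⁆ (Γ 1) (h2.trans (commutator_le_left _ _)) hCΓ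
  rw [hΓ (by rw [← hmul, hC4, hR4])] at hmul2
  refine hCΓ.antisymm (relIndex_eq_one.mp ?_)
  exact (Nat.prime_mul_iff.mp (hmul2.symm ▸ Nat.prime_two :)).elim (fun h' => h'.2)
    fun h' => absurd (relIndex_eq_one.mp h'.2) hCC

theorem isKGroup_of_lowerCentralSeries_one_le_fixedSubgroup {n : ℕ}
    (hcard : Nat.card G = 2 ^ (n + 6)) (hp : 3 ≤ p) (hC : Γ 1 ≤ fixedSubgroup φ) (hφ : φ ≠ 1)
    (h16 : (Γ 1).index ≤ 16) (hΓ : (Γ 1).index = 16 → (Γ 2).relIndex (Γ 1) = 2)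
    (h23 : ¬ Γ 2 ≤ Γ 3) : IsKGroup G n := by
  obtain ⟨rfl, hC4, hCC, hR4⟩ :=
    h.structure_of_lowerCentralSeries_one_le_fixedSubgroup hcard hp hC hφ h16 hΓ h23
  have hcomm {c q : G} (hc : c ∈ fixedSubgroup φ) (hq : q ∈ autCommutator φ ⊤) : Commute q c := by
    have hCQ : ⁅fixedSubgroup φ, autCommutator φ ⊤⁆ = ⊥ :=
      commutator_autCommutator_eq_bot le_rfl ((commutator_mono le_top le_rfl).trans hC)
    exact (commutatorElement_eq_one_iff_commute.mp <|
      mem_bot.mp (hCQ.le (commutator_mem_commutator hc hq))).symm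
  obtain ⟨x, y, κ, hx, hy, hκ, hκ1, hxκ, hyκ, hyx, hgen⟩ :=
    h.exists_quaternion_generators hC hC4
  have hcardC : Nat.card (fixedSubgroup φ) = 2 ^ (n + 1 + 3) := by
    have := (fixedSubgroup φ).card_mul_index
    rw [hC4, hcard, show 2 ^ (n + 6) = 2 ^ (n + 1 + 3) * 4 by ring] at this
    omega
  have hidxC : (commutator (fixedSubgroup φ)).index = 4 := by
    rw [← hR4, ← hCC, relIndex, ← map_subtype_commutator, subgroupOf,
      comap_map_eq_self_of_injective (subtype_injective _)]
  obtain ⟨r, s, α, β, hr, hrs, hmax⟩ := exists_maxClassRelations hcardC hidxC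
  have hκC : (⟨κ, hκ.1⟩ : fixedSubgroup φ) ∈ center (fixedSubgroup φ) := mem_center_iff.mpr
    fun c => Subtype.ext (hcomm c.2 hκ.2).symm
  have hκr := eq_one_or_eq_pow_of_mem_center hcardC hidxC hr hκC (Subtype.ext hκ1)
  refine (hmax.map (fixedSubgroup φ).subtype).isKGroup_of_centralProduct (hcomm r.2 hx)
    (hcomm s.2 hx) (hcomm r.2 hy) (hcomm s.2 hy) hxκ hyκ hyx ?_ ?_ hcard
  · exact hκr.imp (congrArg Subtype.val) (congrArg Subtype.val)
  · have hC' := congrArg (Subgroup.map (fixedSubgroup φ).subtype) hrs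
    rw [Subgroup.map_sup, MonoidHom.map_zpowers, MonoidHom.map_zpowers, ← MonoidHom.range_eq_map,
      range_subtype] at hC'
    refine top_le_iff.mp (hgen.symm.le.trans (sup_le (hC'.symm.le.trans ?_) (closure_mono ?_)))
    · rw [sup_le_iff, zpowers_le, zpowers_le]
      exact ⟨subset_closure (by simp), subset_closure (by simp)⟩
    · simp [Set.pair_subset_iff]

theorem lowerCentralSeries_one_le_two (h₁ : autCommutator φ (Γ 1) ≤ Γ 2)
    (hCC : ⁅fixedSubgroup φ, fixedSubgroup φ⁆ ≤ Γ 2)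
    (hQQ : ⁅autCommutator φ ⊤, autCommutator φ ⊤⁆ ≤ Γ 2) : Γ 1 ≤ Γ 2 := by
  have hCQ : ⁅fixedSubgroup φ, autCommutator φ ⊤⁆ ≤ Γ 2 :=
    commutator_fixedSubgroup_autCommutator_le h₁
  refine h.commutator_top_le ?_ ?_ <;> rw [commutator_comm]
  · refine h.commutator_top_le hCC ?_
    rwa [commutator_comm]
  · exact h.commutator_top_le hCQ hQQ

theorem index_fixedSubgroup_sup_eq_four {m : ℕ} (hcard : Nat.card G = 2 ^ m)
    (hp : p = 3) (hn : ¬ autCommutator φ ⊤ ≤ Γ 1) (h8 : (Γ 1).index ≤ 8) :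
    (fixedSubgroup φ ⊔ Γ 1).index = 4 := by
  have hΓ := mapsTo_of_characteristic (φ := φ) (Γ 1)
  have hD := mapsTo_sup mapsTo_fixedSubgroup hΓ
  have hDn : (fixedSubgroup φ ⊔ Γ 1).Normal := .of_commutator_le G le_sup_right
  have h4 := h.add_one_le_relIndex (fun _ _ => mem_top _) hD le_top
    (mt (h.autCommutator_le_of_le_sup hΓ) hn)
  have hmod := h.relIndex_modEq_one (fun _ _ => mem_top _) hD le_top
    (inf_le_right.trans le_sup_left)
  rw [relIndex_top_right, hp] at h4 hmod
  have hle : (fixedSubgroup φ ⊔ Γ 1).index ≤ 8 :=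
    (Nat.le_of_dvd (Nat.pos_of_ne_zero index_ne_zero_of_finite)
      (index_dvd_of_le le_sup_right)).trans h8
  have h7 : (fixedSubgroup φ ⊔ Γ 1).index ≠ 7 := fun h7 => by
    have hdvd : 7 ∣ 2 ^ m := h7 ▸ hcard ▸ index_dvd_card _
    have := (by norm_num : Nat.Prime 7).dvd_of_dvd_pow hdvd
    omega
  unfold Nat.ModEq at hmod
  omega

end IsCoprimeAut

theorem IsCoprimeAut.commutator_lowerCentralSeries_one_autCommutator_le [Finite G]
    (h : IsCoprimeAut 3 φ) (h4 : (fixedSubgroup φ ⊔ Γ 1).index = 4)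
    (hCC : ⁅fixedSubgroup φ, fixedSubgroup φ⁆ ≤ Γ 2)
    (h₁ : autCommutator φ (Γ 1) ≤ Γ 2) (h2 : (Γ 2).relIndex (Γ 1) = 2) :
    ⁅Γ 1, autCommutator φ ⊤⁆ ≤ Γ 3 := by
  have hΓ (i : ℕ) := mapsTo_of_characteristic (φ := φ) (Γ i)
  obtain ⟨x, hx, hφy, hQ⟩ := h.exists_orbit_of_index_eq_four le_rfl (hΓ 1) h4
  have hsq : x ^ 2 ∈ Γ 1 := h.sq_mem_of_mem_autCommutator le_rfl (hΓ 1) h4 hx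
  have hxy : ⁅x, φ x⁆ ∉ Γ 2 := fun hxy => by
    have hQQ := (commutator_mono hQ hQ).trans (commutator_sup_closure_pair_le le_rfl hxy)
    have := relIndex_eq_one.mpr (h.lowerCentralSeries_one_le_two h₁ hCC hQQ)
    omega
  have hφsq : φ (x ^ 2) ∉ Γ 2 := fun hy => hxy <| by
    have hx2 : x ^ 2 ∈ Γ 2 := by
      simpa using mul_mem hy (inv_mem (autCommutator_le.mp h₁ _ hsq))
    refine commutatorElement_mem_of_sq_mem hx2 (map_pow φ x 2 ▸ hy) ?_
    rw [← inv_mem_iff, ← inv_pow, ← hφy, ← map_pow, ← map_pow]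
    exact hΓ 2 hy
  have hx2 : x ^ 2 ∉ Γ 2 := fun hx2 => hφsq (hΓ 2 hx2)
  have hE : ⁅closure {x, φ x}, Γ 1⁆ ≤ Γ 3 := by
    rw [Set.insert_eq, Subgroup.closure_union, ← zpowers_eq_closure, ← zpowers_eq_closure]
    apply commutator_sup_left_le <;> rw [commutator_comm]
    · exact commutator_lowerCentralSeries_one_zpowers_le h2 hsq hx2
    · exact commutator_lowerCentralSeries_one_zpowers_le h2 (map_pow φ x 2 ▸ hΓ 1 hsq)
        (map_pow φ x 2 ▸ hφsq)
  have hΓΓ : ⁅Γ 1, Γ 1⁆ ≤ Γ 3 := commutator_lowerCentralSeries_le le_rfl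
  rw [commutator_comm]
  exact (commutator_mono hQ le_rfl).trans (commutator_sup_left_le hΓΓ hE)

namespace IsCoprimeAut

variable [Finite G] (h : IsCoprimeAut p φ)
include h

theorem autCommutator_lowerCentralSeries_succ_le {m : ℕ} (hcard : Nat.card G = 2 ^ m) (hp : p = 3)
    (hn : ¬ autCommutator φ ⊤ ≤ Γ 1) (h8 : (Γ 1).index ≤ 8)
    (h₁ : autCommutator φ (Γ 1) ≤ Γ 2) (h2 : (Γ 2).relIndex (Γ 1) = 2) (i : ℕ) :
    autCommutator φ (Γ (i + 1)) ≤ Γ (i + 2) := by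
  subst hp
  have h4 := h.index_fixedSubgroup_sup_eq_four hcard rfl hn h8
  have hCC : ⁅fixedSubgroup φ ⊔ Γ 1, fixedSubgroup φ ⊔ Γ 1⁆ ≤ Γ 2 := by
    refine commutator_self_le_of_relIndex_le_two le_sup_right index_ne_zero_of_finite ?_
      (commutator_mono le_rfl le_top)
    have := relIndex_mul_index (le_sup_right : Γ 1 ≤ fixedSubgroup φ ⊔ Γ 1)
    rw [h4] at this
    omega
  have hQ := h.commutator_lowerCentralSeries_one_autCommutator_le h4
    ((commutator_mono le_sup_left le_sup_left).trans hCC) h₁ h2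
  exact (h.commutator_lowerCentralSeries_autCommutator_le h₁ hQ i).2

end IsCoprimeAut

theorem relIndex_lowerCentralSeries_one_two_eq_two {x y : G} (hx : x ^ 2 ∈ Γ 1)
    (htop : Γ 1 ⊔ closure {x, y} = ⊤) (hn : ¬ Γ 1 ≤ Γ 2) : (Γ 2).relIndex (Γ 1) = 2 := by
  have hκ : ⁅x, y⁆ ∈ Γ 1 := commutator_mem_commutator (mem_top x) (mem_top y)
  have hΓ : ⁅Γ 1, (⊤ : Subgroup G)⁆ ≤ Γ 2 := le_rfl
  have hκ2 : ⁅x, y⁆ ^ 2 ∈ Γ 2 := commutatorElement_sq_mem hΓ hx hκ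
  have hTΓ : Γ 2 ⊔ zpowers ⁅x, y⁆ ≤ Γ 1 :=
    sup_le (Subgroup.lowerCentralSeries_antitone _ one_le_two) (zpowers_le.mpr hκ)
  have hT : ⁅Γ 1, (⊤ : Subgroup G)⁆ ≤ Γ 2 ⊔ zpowers ⁅x, y⁆ := hΓ.trans le_sup_left
  have hTn : (Γ 2 ⊔ zpowers ⁅x, y⁆).Normal :=
    commutator_top_right_le_iff.mp ((commutator_mono hTΓ (le_refl ⊤)).trans hT)
  have hΓT : Γ 1 ≤ Γ 2 ⊔ zpowers ⁅x, y⁆ := by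
    have hc := commutator_sup_closure_pair_le hT (mem_sup_right (mem_zpowers ⁅x, y⁆))
    rwa [htop] at hc
  have hκΓ : ⁅x, y⁆ ∉ Γ 2 := fun hκΓ => hn (hΓT.trans (sup_le le_rfl (zpowers_le.mpr hκΓ)))
  rw [hΓT.antisymm hTΓ]
  exact relIndex_sup_zpowers_eq_two hκ2 hκΓ

theorem IsCoprimeAut.relIndex_lowerCentralSeries_one_two_eq_two [Finite G]
    (h : IsCoprimeAut 3 φ) (hi : (Γ 1).index = 4) (h4 : (fixedSubgroup φ ⊔ Γ 1).index = 4)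
    (hn : ¬ Γ 1 ≤ Γ 2) : (Γ 2).relIndex (Γ 1) = 2 := by
  have hG : commutator G ≤ Γ 1 := le_rfl
  have hΓ := mapsTo_of_characteristic (φ := φ) (Γ 1)
  have hC : fixedSubgroup φ ≤ Γ 1 := by
    have hmul := relIndex_mul_index (le_sup_right : Γ 1 ≤ fixedSubgroup φ ⊔ Γ 1)
    rw [h4, hi] at hmul
    have hrel : (Γ 1).relIndex (fixedSubgroup φ ⊔ Γ 1) = 1 := by omega
    exact le_sup_left.trans (relIndex_eq_one.mp hrel)
  obtain ⟨x, hx, -, hQ⟩ := h.exists_orbit_of_index_eq_four hG hΓ h4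
  have htop : Γ 1 ⊔ closure {x, φ x} = ⊤ := by
    have hCQ : fixedSubgroup φ ⊔ autCommutator φ ⊤ = ⊤ := h.fixedSubgroup_sup_autCommutator
    exact top_unique (hCQ.symm.trans_le (sup_le (hC.trans le_sup_left) hQ))
  exact _root_.relIndex_lowerCentralSeries_one_two_eq_two
    (h.sq_mem_of_mem_autCommutator hG hΓ h4 hx) htop hn

namespace IsCoprimeAut

variable [Finite G] (h : IsCoprimeAut p φ)
include h

theorem autCommutator_lowerCentralSeries_le_of_relIndex_le_two (h2 : 2 ∣ Nat.card G) {i : ℕ}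
    (hi : (Γ (i + 1)).relIndex (Γ i) ≤ 2) : autCommutator φ (Γ i) ≤ Γ (i + 1) := by
  by_contra hn
  have := h.add_one_le_relIndex (mapsTo_of_characteristic _) (mapsTo_of_characteristic _)
    (Subgroup.lowerCentralSeries_antitone _ (Nat.le_add_right i 1)) hn
  have := h.three_le h2
  omega

theorem eq_three_of_relIndex_le_four (h2 : 2 ∣ Nat.card G) {i : ℕ}
    (hi : (Γ (i + 1)).relIndex (Γ i) ≤ 4) (hn : ¬ autCommutator φ (Γ i) ≤ Γ (i + 1)) :
    p = 3 := by
  have := h.add_one_le_relIndex (mapsTo_of_characteristic _) (mapsTo_of_characteristic _)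
    (Subgroup.lowerCentralSeries_antitone _ (Nat.le_add_right i 1)) hn
  have := h.three_le h2
  omega

theorem not_autCommutator_top_le [Group.IsNilpotent G] (hφ : φ ≠ 1) :
    ¬ autCommutator φ ⊤ ≤ Γ 1 := fun hle =>
  hφ <| MulEquiv.ext fun g => mem_fixedSubgroup.mp <|
    h.lowerCentralSeries_le_fixedSubgroup (j := 0)
      (fun i _ => autCommutator_lowerCentralSeries_le hle i) (mem_top g)

theorem lowerCentralSeries_one_le_fixedSubgroup_of_relIndex_eq_two [Group.IsNilpotent G] {m : ℕ}
    (hcard : Nat.card G = 2 ^ m) (hp : p = 3) (hn : ¬ autCommutator φ ⊤ ≤ Γ 1)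
    (h8 : (Γ 1).index ≤ 8) (h2 : (Γ 2).relIndex (Γ 1) = 2) : Γ 1 ≤ fixedSubgroup φ := by
  have h2G : 2 ∣ Nat.card G :=
    (h2 ▸ relIndex_dvd_card (Γ 2) (Γ 1)).trans (card_subgroup_dvd_card _)
  have h₁ := h.autCommutator_lowerCentralSeries_le_of_relIndex_le_two h2G h2.le
  refine h.lowerCentralSeries_le_fixedSubgroup fun i hi => ?_
  obtain ⟨i, rfl⟩ := Nat.exists_eq_add_of_le' hi
  exact h.autCommutator_lowerCentralSeries_succ_le hcard hp hn h8 h₁ h2 i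

theorem lowerCentralSeries_one_le_fixedSubgroup_of_index_eq_four [Group.IsNilpotent G] {m : ℕ}
    (hcard : Nat.card G = 2 ^ m) (hφ : φ ≠ 1) (h4 : (Γ 1).index = 4) (h12 : ¬ Γ 1 ≤ Γ 2) :
    Γ 1 ≤ fixedSubgroup φ := by
  have hn := h.not_autCommutator_top_le hφ
  have h2G : 2 ∣ Nat.card G := (by norm_num : 2 ∣ 4).trans (h4 ▸ index_dvd_card (Γ 1))
  have hp : p = 3 := h.eq_three_of_relIndex_le_four h2G (i := 0)
    ((relIndex_top_right _).trans_le h4.le) hn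
  subst hp
  have hC4 := h.index_fixedSubgroup_sup_eq_four hcard rfl hn (by omega)
  exact h.lowerCentralSeries_one_le_fixedSubgroup_of_relIndex_eq_two hcard rfl hn (by omega)
    (h.relIndex_lowerCentralSeries_one_two_eq_two h4 hC4 h12)

theorem lowerCentralSeries_one_le_fixedSubgroup_of_index_eq_eight [Group.IsNilpotent G] {m : ℕ}
    {e : ℕ → ℕ} (hcard : Nat.card G = 2 ^ m) (hφ : φ ≠ 1) (h8 : (Γ 1).index = 8)
    (he : ∀ i, (Γ (i + 1)).relIndex (Γ i) = 2 ^ e i) (he₁ : ∀ i, 1 ≤ i → e i ≤ 2)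
    (he₂ : ∀ i, 2 ≤ i → e 1 + e i ≤ 3) (h12 : ¬ Γ 1 ≤ Γ 2) (h45 : ¬ Γ 4 ≤ Γ 5) :
    Γ 1 ≤ fixedSubgroup φ := by
  have h2G : 2 ∣ Nat.card G := (by norm_num : 2 ∣ 8).trans (h8 ▸ index_dvd_card (Γ 1))
  have hle_pow {i k : ℕ} (hi : e i ≤ k) : (Γ (i + 1)).relIndex (Γ i) ≤ 2 ^ k :=
    (he i).trans_le (Nat.pow_le_pow_right two_pos hi)
  have htriv (i : ℕ) (hi : e i ≤ 1) : autCommutator φ (Γ i) ≤ Γ (i + 1) :=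
    h.autCommutator_lowerCentralSeries_le_of_relIndex_le_two h2G (hle_pow hi)
  have he1 : 1 ≤ e 1 := Nat.one_le_iff_ne_zero.mpr fun h0 => h12 <| relIndex_eq_one.mp <| by
    rw [he 1, h0, pow_zero]
  obtain he1 | he1 : e 1 = 1 ∨ e 1 = 2 := by have := he₁ 1 le_rfl; omega
  · by_contra hC
    obtain ⟨i, hi, hn⟩ : ∃ i, 1 ≤ i ∧ ¬ autCommutator φ (Γ i) ≤ Γ (i + 1) := by
      by_contra! hall
      exact hC (h.lowerCentralSeries_le_fixedSubgroup hall)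
    exact hC (h.lowerCentralSeries_one_le_fixedSubgroup_of_relIndex_eq_two hcard
      (h.eq_three_of_relIndex_le_four h2G (hle_pow (he₁ i hi)) hn)
      (h.not_autCommutator_top_le hφ) h8.le (by rw [he 1, he1, pow_one]))
  · have htriv₂ (i : ℕ) (hi : 2 ≤ i) : autCommutator φ (Γ i) ≤ Γ (i + 1) :=
      htriv i (by have := he₂ i hi; omega)
    have h₁ : autCommutator φ (Γ 1) ≤ Γ 2 := by
      by_contra hn
      have := h.three_le h2G
      have : (Γ 2).relIndex (Γ 1) ≤ 4 := hle_pow he1.le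
      exact h45 (h.lowerCentralSeries_four_le_five
        (h.lowerCentralSeries_le_fixedSubgroup htriv₂) hn (by omega))
    refine h.lowerCentralSeries_le_fixedSubgroup fun i hi => ?_
    obtain rfl | hi := hi.eq_or_lt
    · exact h₁
    · exact htriv₂ i hi

theorem lowerCentralSeries_one_le_fixedSubgroup_of_nilpotencyClass_eq [Group.IsNilpotent G]
    {m : ℕ} {e : ℕ → ℕ} (hm : 8 ≤ m) (hcard : Nat.card G = 2 ^ m)
    (hclass : Group.nilpotencyClass G = m - 3) (hφ : φ ≠ 1)
    (he : ∀ i, (Γ (i + 1)).relIndex (Γ i) = 2 ^ e i) (he₀ : e 0 ≤ 4)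
    (he₁ : ∀ i, 1 ≤ i → e 0 + e i ≤ 5) (he₂ : ∀ i, 2 ≤ i → e 0 + e 1 + e i ≤ 6) :
    Γ 1 ≤ fixedSubgroup φ := by
  have hidx : (Γ 1).index = 2 ^ e 0 := (relIndex_top_right _).symm.trans (he 0)
  have hstrict (i : ℕ) (hi : i < m - 3) : ¬ Γ i ≤ Γ (i + 1) :=
    not_lowerCentralSeries_le_succ (hclass ▸ hi)
  have htriv (i : ℕ) (hi : e i ≤ 1) : autCommutator φ (Γ i) ≤ Γ (i + 1) :=
    h.autCommutator_lowerCentralSeries_le_of_relIndex_le_two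
      (hcard ▸ dvd_pow_self 2 (by omega))
      ((he i).trans_le (Nat.pow_le_pow_right two_pos hi))
  have he₀' : 2 ≤ e 0 := by
    by_contra! hlt
    exact h.not_autCommutator_top_le hφ (htriv 0 (by omega))
  obtain h0 | h0 | h0 : e 0 = 2 ∨ e 0 = 3 ∨ e 0 = 4 := by omega
  · exact h.lowerCentralSeries_one_le_fixedSubgroup_of_index_eq_four hcard hφ
      (by rw [hidx, h0]; norm_num) (hstrict 1 (by omega))
  · exact h.lowerCentralSeries_one_le_fixedSubgroup_of_index_eq_eight hcard hφ
      (by rw [hidx, h0]; norm_num) he (fun i hi => by have := he₁ i hi; omega)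
      (fun i hi => by have := he₂ i hi; omega) (hstrict 1 (by omega)) (hstrict 4 (by omega))
  · exact h.lowerCentralSeries_le_fixedSubgroup fun i hi =>
      htriv i (by have := he₁ i hi; omega)

theorem isKGroup_of_nilpotencyClass_eq [Group.IsNilpotent G] {m : ℕ} (hm : 8 ≤ m)
    (hcard : Nat.card G = 2 ^ m) (hclass : Group.nilpotencyClass G = m - 3) (hφ : φ ≠ 1) :
    IsKGroup G (m - 6) := by
  obtain ⟨e, he, he₀, he₁, he₂⟩ := exists_exponents_of_nilpotencyClass_eq hm hcard hclass
  have hidx : (Γ 1).index = 2 ^ e 0 := (relIndex_top_right _).symm.trans (he 0)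
  have hΓ (i : ℕ) (hi : i < m - 3) : ¬ Γ i ≤ Γ (i + 1) :=
    not_lowerCentralSeries_le_succ (hclass ▸ hi)
  have hC : Γ 1 ≤ fixedSubgroup φ :=
    h.lowerCentralSeries_one_le_fixedSubgroup_of_nilpotencyClass_eq hm hcard hclass hφ he he₀ he₁
      he₂
  refine h.isKGroup_of_lowerCentralSeries_one_le_fixedSubgroup (by rw [hcard]; congr 1; omega)
    (h.three_le (hcard ▸ dvd_pow_self 2 (by omega))) hC hφ
    (hidx.trans_le (Nat.pow_le_pow_right two_pos he₀)) (fun h16 => ?_) (hΓ 2 (by omega))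
  have he0 : e 0 = 4 := Nat.pow_right_injective le_rfl (hidx.symm.trans h16)
  have he1 : (Γ 2).relIndex (Γ 1) ≤ 2 ^ 1 :=
    (he 1).trans_le (Nat.pow_le_pow_right two_pos (by have := he₁ 1 le_rfl; omega))
  have h1 : (Γ 2).relIndex (Γ 1) ≠ 1 := mt relIndex_eq_one.mp (hΓ 1 (by omega))
  have h0 : (Γ 2).relIndex (Γ 1) ≠ 0 := index_ne_zero_of_finite
  omega

end IsCoprimeAut

end LowerCentralSeries

theorem exists_isCoprimeAut {G : Type*} [Group G] [Finite G] {q m : ℕ} (hq : q.Prime)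
    (hcard : Nat.card G = q ^ m) (haut : ¬ IsPGroup q (MulAut G)) :
    ∃ (φ : MulAut G) (p : ℕ), IsCoprimeAut p φ ∧ φ ≠ 1 := by
  have : Fact q.Prime := ⟨hq⟩
  obtain ⟨p, hp, hdvd, hpq⟩ : ∃ p, p.Prime ∧ p ∣ Nat.card (MulAut G) ∧ p ≠ q := by
    by_contra! hall
    exact haut (IsPGroup.iff_card.mpr
      ⟨_, Nat.eq_prime_pow_of_unique_prime_dvd Nat.card_pos.ne' fun hd hdvd => hall _ hd hdvd⟩)
  have : Fact p.Prime := ⟨hp⟩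
  obtain ⟨φ, hφ⟩ := exists_prime_orderOf_dvd_card' p hdvd
  refine ⟨φ, p, ⟨hp, fun h => ?_, hφ ▸ pow_orderOf_eq_one φ⟩, ?_⟩
  · exact hpq ((Nat.prime_dvd_prime_iff_eq hp hq).mp (hp.dvd_of_dvd_pow (hcard ▸ h)))
  · rintro rfl
    exact hp.ne_one (hφ.symm.trans orderOf_one)

/-- If `G` is a finite `2`-group of order `2 ^ m` with `m ≥ 8` and coclass `3`
(nilpotency class `m - 3`) whose automorphism group is not a `2`-group, then `G` is
isomorphic to `K_{m-6}^i` for some `i ∈ {1, 2, 3, 4, 5, 6}`. -/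
theorem coclass_three_aut_not_pGroup_classification
    {G : Type*} [Group G] [Finite G] [Group.IsNilpotent G] {m : ℕ} (hm : 8 ≤ m)
    (hcard : Nat.card G = 2 ^ m) (hclass : Group.nilpotencyClass G = m - 3)
    (haut : ¬ IsPGroup 2 (MulAut G)) :
    Nonempty (G ≃* K1 (m - 6)) ∨ Nonempty (G ≃* K2 (m - 6)) ∨
      Nonempty (G ≃* K3 (m - 6)) ∨ Nonempty (G ≃* K4 (m - 6)) ∨
      Nonempty (G ≃* K5 (m - 6)) ∨ Nonempty (G ≃* K6 (m - 6)) := by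
  obtain ⟨φ, p, h, hφ⟩ := exists_isCoprimeAut Nat.prime_two hcard haut
  exact (h.isKGroup_of_nilpotencyClass_eq hm hcard hclass hφ).nonempty_mulEquiv
end

section
/- Let G be a finite group of order 2^n with n ≥ 4 and nilpotency class n − 1 (i.e., G is a 2-group of maximal class, equivalently of coclass 1, and order at least 2^4). Then the automorphism group Aut(G) is a 2-group. -/
/-!
Write `γ i` for the lower central series of `G`, starting with `γ 0 = G`, and let `c` be its class,
so that `|G| = 2 ^ (c + 1)` with `c ≥ 3`. Since `G ⧸ γ 1` is not cyclic, it has order at least `4`;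
all later factors have order at least `2`, and comparing with `|G|` shows that these bounds are
attained. The remaining gap between `γ 1` and `G` is split by the centralizer `C` of `γ (c - 2)`:
commutators with an element of `γ (c - 2)` outside the central subgroup `γ (c - 1)` define a
homomorphism from `G` onto `γ (c - 1)` with kernel `C`. This gives a chain of characteristic
subgroups `1 = γ c < ⋯ < γ 1 < C < G` with all indices equal to `2`, and any automorphism acts
trivially on the factors of such a chain, hence has `2`-power order.
-/

open Subgroup
open scoped commutatorElement

section Stability

variable {G : Type*} [Group G]

theorem inv_mul_apply_mem_of_relIndex_eq_two {H K : Subgroup G} [H.Characteristic]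
    [K.Characteristic] (hHK : H.relIndex K = 2) (φ : MulAut G) {x : G} (hx : x ∈ K) :
    x⁻¹ * φ x ∈ H := by
  have apply_mem_iff (L : Subgroup G) [hL : L.Characteristic] : φ x ∈ L ↔ x ∈ L :=
    SetLike.ext_iff.1 (hL.fixed φ) x
  have hmul := mul_mem_iff_of_index_two hHK
    (a := (⟨x, hx⟩ : K)⁻¹) (b := ⟨φ x, (apply_mem_iff K).2 hx⟩)
  simpa [mem_subgroupOf, apply_mem_iff H] using hmul

theorem pow_card_mem_fixingSubgroup {H K : Subgroup G} {φ : MulAut G}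
    (hfix : φ ∈ fixingSubgroup (MulAut G) (H : Set G)) (hstab : ∀ x ∈ K, x⁻¹ * φ x ∈ H) :
    φ ^ Nat.card H ∈ fixingSubgroup (MulAut G) (K : Set G) := by
  rw [mem_fixingSubgroup_iff] at hfix ⊢
  intro x hx
  obtain ⟨z, hz, hφx⟩ : ∃ z ∈ H, φ x = x * z := ⟨_, hstab x hx, by group⟩
  have hφz : φ z = z := hfix z hz
  have iterate_apply (j : ℕ) : (φ ^ j) x = x * z ^ j := by
    induction j with
    | zero => simp
    | succ j ih => rw [pow_succ', MulAut.mul_apply, ih, map_mul, map_pow, hφz, hφx, mul_assoc,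
        pow_succ']
  have hzpow : z ^ Nat.card H = 1 := orderOf_dvd_iff_pow_eq_one.1 (H.orderOf_dvd_natCard hz)
  rw [MulAut.smul_def, iterate_apply, hzpow, mul_one]

/-- Every automorphism of `G` has a `p`-power power that fixes `H` pointwise. For characteristic `H`
in a finite group, this says that `Aut(G)` induces a `p`-group of automorphisms on `H`. -/
def AutInducesPGroup (p : ℕ) (H : Subgroup G) : Prop :=
  ∀ φ : MulAut G, ∃ k, φ ^ p ^ k ∈ fixingSubgroup (MulAut G) (H : Set G)

namespace AutInducesPGroup

theorem bot (p : ℕ) : AutInducesPGroup p (⊥ : Subgroup G) := fun φ =>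
  ⟨0, by simp [mem_fixingSubgroup_iff]⟩

theorem isPGroup_mulAut {p : ℕ} (h : AutInducesPGroup p (⊤ : Subgroup G)) :
    IsPGroup p (MulAut G) := by
  intro φ
  obtain ⟨k, hk⟩ := h φ
  exact ⟨k, MulEquiv.ext fun x => (mem_fixingSubgroup_iff _).1 hk x (mem_top x)⟩

theorem of_relIndex_eq_two {H K : Subgroup G} [Finite H] [H.Characteristic] [K.Characteristic]
    (hH : IsPGroup 2 H) (h : AutInducesPGroup 2 H) (hHK : H.relIndex K = 2) :
    AutInducesPGroup 2 K := by
  intro φ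
  obtain ⟨k, hk⟩ := h φ
  obtain ⟨m, hm⟩ := IsPGroup.iff_card.1 hH
  refine ⟨k + m, ?_⟩
  rw [pow_add, pow_mul, ← hm]
  exact pow_card_mem_fixingSubgroup hk fun x hx => inv_mul_apply_mem_of_relIndex_eq_two hHK _ hx

end AutInducesPGroup

end Stability

section SecondCenter

variable {G : Type*} [Group G]

/-- The map `g ↦ ⁅a, g⁆` for an element `a` of the second center, as a homomorphism to the
center. -/
def commutatorHom (a : G) (ha : ∀ g : G, ⁅a, g⁆ ∈ center G) : G →* center G :=
  MonoidHom.mk' (fun g => ⟨⁅a, g⁆, ha g⟩) fun g h => Subtype.ext <| by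
    have hcomm : g * ⁅a, h⁆ = ⁅a, h⁆ * g := mem_center_iff.1 (ha h) g
    change ⁅a, g * h⁆ = ⁅a, g⁆ * ⁅a, h⁆
    rw [commutatorElement_mul_right_eq_mul_conj, mul_assoc ⁅a, g⁆, hcomm, ← mul_assoc,
      mul_inv_cancel_right]

theorem ker_commutatorHom (a : G) (ha : ∀ g : G, ⁅a, g⁆ ∈ center G) :
    (commutatorHom a ha).ker = centralizer {a} := by
  ext g
  rw [MonoidHom.mem_ker, mem_centralizer_singleton_iff, eq_comm (a := g * a),
    ← commutatorElement_eq_one_iff_mul_comm]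
  exact Subtype.ext_iff

open scoped IsMulCommutative in
theorem commutator_le_centralizer {A : Subgroup G} (hA : ⁅A, (⊤ : Subgroup G)⁆ ≤ center G) :
    commutator G ≤ centralizer (A : Set G) := by
  rw [centralizer_eq_iInf]
  refine le_iInf₂ fun a ha => ?_
  have hcentral (g : G) : ⁅a, g⁆ ∈ center G := hA (commutator_mem_commutator ha (mem_top g))
  rw [← ker_commutatorHom a hcentral]
  exact Abelianization.commutator_subset_ker (commutatorHom a hcentral)

theorem index_centralizer_singleton_dvd_card {Z : Subgroup G} (hZ : Z ≤ center G) {a : G}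
    (ha : ∀ g : G, ⁅a, g⁆ ∈ Z) : (centralizer {a}).index ∣ Nat.card Z := by
  rw [← ker_commutatorHom a fun g => hZ (ha g), index_ker,
    ← Nat.card_congr (subgroupOfEquivOfLe hZ).toEquiv]
  refine card_dvd_of_le ?_
  rintro _ ⟨g, rfl⟩
  exact ha g

theorem le_of_prime_relIndex {H K L : Subgroup G} (hprime : (H.relIndex L).Prime) (hHK : H ≤ K)
    (hKL : K ≤ L) (hKH : ¬K ≤ H) : L ≤ K := by
  have hmul := relIndex_mul_relIndex H K L hHK hKL
  refine relIndex_eq_one.1 ?_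
  exact (hprime.eq_one_or_self_of_dvd _ (Dvd.intro _ hmul)).elim
    (fun h => absurd (relIndex_eq_one.1 h) hKH)
    fun h => Nat.eq_of_mul_eq_mul_left hprime.pos (by rw [mul_one, ← h, hmul, h])

theorem centralizer_eq_centralizer_singleton {A Z : Subgroup G} (hZ : Z ≤ center G) (hZA : Z ≤ A)
    (hprime : (Z.relIndex A).Prime) {a : G} (haA : a ∈ A) (haZ : a ∉ Z) :
    centralizer (A : Set G) = centralizer {a} := by
  refine le_antisymm (centralizer_le (Set.singleton_subset_iff.2 haA)) ?_
  rw [le_centralizer_iff]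
  have hZB : Z ≤ A ⊓ centralizer (centralizer {a}) :=
    le_inf hZA (hZ.trans (center_le_centralizer _))
  have haB : a ∈ A ⊓ centralizer (centralizer {a}) :=
    ⟨haA, Set.subset_centralizer_centralizer (Set.mem_singleton a)⟩
  exact (le_of_prime_relIndex hprime hZB inf_le_left fun hBZ => haZ (hBZ haB)).trans inf_le_right

theorem index_centralizer_dvd_card {A Z : Subgroup G} (hZ : Z ≤ center G) (hZA : Z ≤ A)
    (hprime : (Z.relIndex A).Prime) (hAZ : ⁅A, (⊤ : Subgroup G)⁆ ≤ Z) :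
    (centralizer (A : Set G)).index ∣ Nat.card Z := by
  obtain ⟨a, haA, haZ⟩ : ∃ a ∈ A, a ∉ Z := SetLike.not_le_iff_exists.1 fun hle =>
    hprime.ne_one (relIndex_eq_one.2 hle)
  rw [centralizer_eq_centralizer_singleton hZ hZA hprime haA haZ]
  exact index_centralizer_singleton_dvd_card hZ fun g =>
    hAZ (commutator_mem_commutator haA (mem_top g))

end SecondCenter

section LowerCentralSeries

variable {G : Type*} [Group G]

theorem lowerCentralSeries_strictAntiOn [Group.IsNilpotent G] :
    StrictAntiOn (⊤ : Subgroup G).lowerCentralSeries (Set.Iic (Group.nilpotencyClass G)) := by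
  set γ := (⊤ : Subgroup G).lowerCentralSeries
  have hanti : Antitone γ := Subgroup.lowerCentralSeries_antitone _
  intro i _ j hj hij
  refine (hanti hij.le).lt_of_ne fun heq => ?_
  have hsucc : γ (i + 1) = γ i := (hanti i.le_succ).antisymm (heq ▸ hanti hij)
  have hconst (k : ℕ) : γ (i + k) = γ i := by
    induction k with
    | zero => rfl
    | succ k ih => exact (congrArg (⁅·, ⊤⁆) ih).trans hsucc
  have hbot : γ i = ⊥ := by
    rw [← hconst (Group.nilpotencyClass G),
      Subgroup.lowerCentralSeries_eq_bot_iff_nilpotencyClass_le]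
    exact Nat.le_add_left _ _
  exact (Subgroup.lowerCentralSeries_eq_bot_iff_nilpotencyClass_le.1 hbot).not_gt (hij.trans_le hj)

theorem lowerCentralSeries_le_center_iff [Group.IsNilpotent G] {i : ℕ} :
    (⊤ : Subgroup G).lowerCentralSeries i ≤ center G ↔ Group.nilpotencyClass G ≤ i + 1 := by
  rw [← commutator_top_right_eq_bot_iff_le_center, ← Subgroup.lowerCentralSeries_succ,
    Subgroup.lowerCentralSeries_eq_bot_iff_nilpotencyClass_le]

theorem commutator_le_commutator_top_of_isCyclic (N : Subgroup G) [N.Normal] [IsCyclic (G ⧸ N)] :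
    commutator G ≤ ⁅N, ⊤⁆ := by
  have hle : ⁅N, ⊤⁆ ≤ N := commutator_le_left N ⊤
  let f : G ⧸ ⁅N, ⊤⁆ →* G ⧸ N := QuotientGroup.map _ _ (MonoidHom.id G) hle
  have hf : f.ker ≤ center (G ⧸ ⁅N, ⊤⁆) := by
    intro x hx
    obtain ⟨n, rfl⟩ := QuotientGroup.mk_surjective x
    have hn : n ∈ N := (QuotientGroup.eq_one_iff n).1 hx
    refine mem_center_iff.2 fun y => ?_
    obtain ⟨g, rfl⟩ := QuotientGroup.mk_surjective y
    refine (commutatorElement_eq_one_iff_mul_comm.1 ?_).symm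
    exact (QuotientGroup.eq_one_iff ⁅n, g⁆).2 (commutator_mem_commutator hn (mem_top g))
  exact Subgroup.Normal.quotient_commutative_iff_commutator_le.1
    (f.isMulCommutative_of_isCyclic_of_ker_le_center hf)

theorem not_isCyclic_abelianization [Group.IsNilpotent G] (hc : 1 < Group.nilpotencyClass G) :
    ¬IsCyclic (Abelianization G) := by
  intro (_ : IsCyclic (G ⧸ commutator G))
  exact (lowerCentralSeries_strictAntiOn hc.le hc one_lt_two).not_ge
    (commutator_le_commutator_top_of_isCyclic (commutator G))

end LowerCentralSeries

section PGroup

variable {G : Type*} [Group G] {p : ℕ} [Fact p.Prime] [Finite G]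

theorem prime_dvd_relIndex_of_lt (hG : IsPGroup p G) {H K : Subgroup G} (hHK : H < K) :
    p ∣ H.relIndex K := by
  obtain ⟨k, hk⟩ := (hG.to_subgroup K).index (H.subgroupOf K)
  have hk0 : k ≠ 0 := by
    rintro rfl
    exact hHK.not_ge (relIndex_eq_one.1 hk)
  exact (dvd_pow_self p hk0).trans (dvd_of_eq hk.symm)

theorem pow_dvd_relIndex_of_strictAntiOn (hG : IsPGroup p G) {H : ℕ → Subgroup G} {c : ℕ}
    (hH : StrictAntiOn H (Set.Iic c)) {i j : ℕ} (hij : i ≤ j) (hj : j ≤ c) :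
    p ^ (j - i) ∣ (H j).relIndex (H i) := by
  induction j, hij using Nat.le_induction with
  | base => simp
  | succ j hij ih =>
    have hjc : j ≤ c := j.le_succ.trans hj
    have hlt : H (j + 1) < H j := hH hjc hj j.lt_succ_self
    have hle : H j ≤ H i := hH.antitoneOn (hij.trans hjc) hjc hij
    rw [Nat.succ_sub hij, pow_succ', ← relIndex_mul_relIndex _ _ _ hlt.le hle]
    exact mul_dvd_mul (prime_dvd_relIndex_of_lt hG hlt) (ih hjc)

theorem sq_dvd_index_commutator [Group.IsNilpotent G] (hG : IsPGroup p G)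
    (hc : 1 < Group.nilpotencyClass G) : p ^ 2 ∣ (commutator G).index := by
  obtain ⟨k, hk⟩ := hG.index (commutator G)
  rw [hk]
  refine pow_dvd_pow p (Nat.lt_of_not_le fun hk1 => not_isCyclic_abelianization hc ?_)
  refine isCyclic_of_card_dvd_prime (p := p) ?_
  calc Nat.card (Abelianization G) = p ^ k := hk
    _ ∣ p := (pow_dvd_pow p hk1).trans (pow_one p).dvd

end PGroup

/-- `G` is a `p`-group of maximal class, that is, of coclass one: `|G| = p ^ n` where `G` has class
`n - 1`. For prime `p` such a group is automatically nilpotent. -/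
def HasMaximalClass (p : ℕ) (G : Type*) [Group G] : Prop :=
  Nat.card G = p ^ (Group.nilpotencyClass G + 1)

namespace HasMaximalClass

variable {G : Type*} [Group G]

theorem isPGroup {p : ℕ} (hG : HasMaximalClass p G) : IsPGroup p G :=
  IsPGroup.of_card hG

variable {p : ℕ} [hp : Fact p.Prime] [Finite G]

theorem isNilpotent (hG : HasMaximalClass p G) : Group.IsNilpotent G :=
  hG.isPGroup.isNilpotent

theorem index_lowerCentralSeries (hG : HasMaximalClass p G) (hc : 1 < Group.nilpotencyClass G)
    {i : ℕ} (hi : 1 ≤ i) (hic : i ≤ Group.nilpotencyClass G) :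
    ((⊤ : Subgroup G).lowerCentralSeries i).index = p ^ (i + 1) := by
  have := hG.isNilpotent
  set c := Group.nilpotencyClass G
  set γ := (⊤ : Subgroup G).lowerCentralSeries
  have hcard : p ^ (c - i) ∣ Nat.card (γ i) := by
    rw [← relIndex_bot_left, ← Subgroup.lowerCentralSeries_nilpotencyClass]
    exact pow_dvd_relIndex_of_strictAntiOn hG.isPGroup lowerCentralSeries_strictAntiOn hic le_rfl
  have hindex : p ^ (i + 1) ∣ (γ i).index := by
    rw [← relIndex_mul_index (Subgroup.lowerCentralSeries_antitone ⊤ hi),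
      show i + 1 = (i - 1) + 2 by omega, pow_add]
    exact mul_dvd_mul
      (pow_dvd_relIndex_of_strictAntiOn hG.isPGroup lowerCentralSeries_strictAntiOn hi hic)
      (sq_dvd_index_commutator hG.isPGroup hc)
  refine Nat.dvd_antisymm ?_ hindex
  refine Nat.dvd_of_mul_dvd_mul_left (pow_pos hp.out.pos (c - i)) ?_
  calc p ^ (c - i) * (γ i).index ∣ Nat.card (γ i) * (γ i).index := mul_dvd_mul_right hcard _
    _ = p ^ (c + 1) := (γ i).card_mul_index.trans hG
    _ = p ^ (c - i) * p ^ (i + 1) := by rw [← pow_add]; congr 1; omega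

theorem relIndex_lowerCentralSeries (hG : HasMaximalClass p G) (hc : 1 < Group.nilpotencyClass G)
    {i : ℕ} (hi : 1 ≤ i) (hic : i < Group.nilpotencyClass G) :
    ((⊤ : Subgroup G).lowerCentralSeries (i + 1)).relIndex
      ((⊤ : Subgroup G).lowerCentralSeries i) = p := by
  have hmul := relIndex_mul_index ((⊤ : Subgroup G).lowerCentralSeries_antitone i.le_succ)
  rw [hG.index_lowerCentralSeries hc hi hic.le,
    hG.index_lowerCentralSeries hc (Nat.le_add_left 1 i) hic, pow_succ' p (i + 1)] at hmul
  exact Nat.eq_of_mul_eq_mul_right (pow_pos hp.out.pos _) hmul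

section Centralizer

variable {k : ℕ}

theorem index_centralizer_lowerCentralSeries (hG : HasMaximalClass p G)
    (hc : Group.nilpotencyClass G = k + 3) :
    (centralizer ((⊤ : Subgroup G).lowerCentralSeries (k + 1) : Set G)).index = p := by
  have := hG.isNilpotent
  set γ := (⊤ : Subgroup G).lowerCentralSeries
  have hcentral : γ (k + 2) ≤ center G := lowerCentralSeries_le_center_iff.2 hc.le
  have hrel : (γ (k + 2)).relIndex (γ (k + 1)) = p :=
    hG.relIndex_lowerCentralSeries (by omega) (by omega) (by omega)
  have hcard : Nat.card (γ (k + 2)) = p := by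
    rw [← relIndex_bot_left, ← Subgroup.lowerCentralSeries_nilpotencyClass, hc]
    exact hG.relIndex_lowerCentralSeries (by omega) (by omega) (by omega)
  have hdvd : (centralizer (γ (k + 1) : Set G)).index ∣ p := hcard ▸
    index_centralizer_dvd_card hcentral (Subgroup.lowerCentralSeries_antitone ⊤ (Nat.le_succ _))
      (hrel.symm ▸ hp.out) le_rfl
  refine (hp.out.eq_one_or_self_of_dvd _ hdvd).resolve_left fun hone => ?_
  have hle : γ (k + 1) ≤ center G := centralizer_eq_top_iff_subset.1 (index_eq_one.1 hone)
  have hclass : Group.nilpotencyClass G ≤ k + 2 := lowerCentralSeries_le_center_iff.1 hle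
  omega

theorem relIndex_commutator_centralizer_lowerCentralSeries (hG : HasMaximalClass p G)
    (hc : Group.nilpotencyClass G = k + 3) :
    ((⊤ : Subgroup G).lowerCentralSeries 1).relIndex
      (centralizer ((⊤ : Subgroup G).lowerCentralSeries (k + 1) : Set G)) = p := by
  have := hG.isNilpotent
  have hmul := relIndex_mul_index
    (commutator_le_centralizer (lowerCentralSeries_le_center_iff (i := k + 2).2 hc.le))
  rw [hG.index_centralizer_lowerCentralSeries hc, ← top_lowerCentralSeries_one,
    hG.index_lowerCentralSeries (by omega) le_rfl (by omega), sq] at hmul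
  exact Nat.eq_of_mul_eq_mul_right hp.out.pos hmul

end Centralizer

theorem autInducesPGroup_lowerCentralSeries (hG : HasMaximalClass 2 G)
    (hc : 1 < Group.nilpotencyClass G) {i : ℕ} (hi : 1 ≤ i) :
    AutInducesPGroup 2 ((⊤ : Subgroup G).lowerCentralSeries i) := by
  have := hG.isNilpotent
  rcases le_total (Group.nilpotencyClass G) i with hci | hic
  · rw [Subgroup.lowerCentralSeries_eq_bot_iff_nilpotencyClass_le.2 hci]
    exact .bot 2
  · induction hic using Nat.decreasingInduction with
    | self =>
      rw [Subgroup.lowerCentralSeries_nilpotencyClass]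
      exact .bot 2
    | of_succ i hic ih =>
      exact (ih (by omega)).of_relIndex_eq_two (hG.isPGroup.to_subgroup _)
        (hG.relIndex_lowerCentralSeries hc hi hic)

end HasMaximalClass

/-- The automorphism group of any finite `2`-group of order `2 ^ n` with `n ≥ 4` and
maximal class `n - 1` (i.e. coclass `1`) is a `2`-group. -/
theorem aut_isPGroup_of_coclass_one_of_card_ge
    {G : Type*} [Group G] [Finite G] [Group.IsNilpotent G] {n : ℕ} (hn : 4 ≤ n)
    (hcard : Nat.card G = 2 ^ n) (hclass : Group.nilpotencyClass G = n - 1) :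
    IsPGroup 2 (MulAut G) := by
  obtain ⟨k, rfl⟩ : ∃ k, n = k + 4 := Nat.exists_eq_add_of_le' hn
  have hc : Group.nilpotencyClass G = k + 3 := hclass
  have hG : HasMaximalClass 2 G := by rw [HasMaximalClass, hcard, hc]
  have hcommutator := hG.autInducesPGroup_lowerCentralSeries (by omega) le_rfl
  have hcentralizer := hcommutator.of_relIndex_eq_two (hG.isPGroup.to_subgroup _)
    (hG.relIndex_commutator_centralizer_lowerCentralSeries hc)
  have htop := hcentralizer.of_relIndex_eq_two (K := ⊤) (hG.isPGroup.to_subgroup _)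
    (by rw [relIndex_top_right, hG.index_centralizer_lowerCentralSeries hc])
  exact htop.isPGroup_mulAut
end
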